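/- arXiv:2512.05054 — 6 statements merged into one kernel-verified Lean document; each statement's English description precedes it below -/
import Mathlib

section
/- Under assumptions (h1) and (h2), the map s : (K₁ \ {0}) × D → (0,∞) is continuous. -/
/-!
Rescaling `u` rescales `s u v` inversely, so `s u v = ‖u‖⁻¹ * s (‖u‖⁻¹ • u) v` and only unit
vectors matter. There (h2) confines `s` to the compact interval `[m, M]`, away from `0`: every
cluster value is a positive zero of the limiting equation, hence equals `s` at the limit point.
-/

open Filter Set Topology

theorem continuousOn_of_eq_iff_of_isCompact {P Y Z : Type*} [TopologicalSpace P]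
    [TopologicalSpace Y] [TopologicalSpace Z] [T1Space Z] {A : Set P} {C : Set Y}
    {Φ : P × Y → Z} {c : Z} {f : P → Y} (hC : IsCompact C)
    (hΦ : ContinuousOn Φ (A ×ˢ C)) (hfC : MapsTo f A C)
    (hf : ∀ p ∈ A, ∀ y ∈ C, Φ (p, y) = c ↔ y = f p) : ContinuousOn f A := by
  intro p₀ hp₀
  have hA : ∀ᶠ p in 𝓝[A] p₀, p ∈ A := eventually_mem_nhdsWithin
  refine hC.tendsto_nhds_of_unique_mapClusterPt (hA.mono hfC) fun y hy hcluster ↦ ?_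
  obtain ⟨U, hU, hfU⟩ := mapClusterPt_iff_ultrafilter.mp hcluster
  have hAU : ∀ᶠ p in U, p ∈ A := hU hA
  have hgraph : Tendsto (fun p ↦ (p, f p)) U (𝓝[A ×ˢ C] (p₀, y)) :=
    tendsto_nhdsWithin_iff.mpr
      ⟨(tendsto_id'.mpr (hU.trans nhdsWithin_le_nhds)).prodMk_nhds hfU,
        hAU.mono fun p hp ↦ ⟨hp, hfC hp⟩⟩
  have hconst : (fun p ↦ Φ (p, f p)) =ᶠ[U] fun _ ↦ c :=
    hAU.mono fun p hp ↦ (hf p hp (f p) (hfC hp)).mpr rfl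
  have hlim : Tendsto (fun _ : P ↦ c) U (𝓝 (Φ (p₀, y))) :=
    ((hΦ (p₀, y) ⟨hp₀, hy⟩).tendsto.comp hgraph).congr' hconst
  exact (hf p₀ hp₀ y hy).mp (tendsto_const_nhds_iff.mp hlim).symm

/-- Condition (h1): for each `u ∈ K \ {0}` and `v ∈ D`, the open ray through `u` meets the
Nehari-type set `{w | G w v = 0}` at exactly one point, namely `s u v • u` with `s u v > 0`. In the
paper `G u v = 𝓕 (T₁ (u, v), u)`. The values of `s` elsewhere are arbitrary. -/
def IsNehariScaling {X Y Z : Type*} [Zero X] [SMul ℝ X] [Zero Z] (G : X → Y → Z) (K : Set X)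
    (D : Set Y) (s : X → Y → ℝ) : Prop :=
  ∀ u ∈ K, u ≠ 0 → ∀ v ∈ D,
    0 < s u v ∧ G (s u v • u) v = 0 ∧ ∀ σ : ℝ, 0 < σ → G (σ • u) v = 0 → σ = s u v

namespace IsNehariScaling

variable {X Y Z : Type*} [Zero Z] {G : X → Y → Z} {K : Set X} {D : Set Y} {s : X → Y → ℝ}

theorem apply_smul_eq_zero_iff [Zero X] [SMul ℝ X] (hs : IsNehariScaling G K D s) {u : X}
    (hu : u ∈ K) (hu0 : u ≠ 0) {v : Y} (hv : v ∈ D) {σ : ℝ} (hσ : 0 < σ) :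
    G (σ • u) v = 0 ↔ σ = s u v := by
  obtain ⟨-, hzero, hunique⟩ := hs u hu hu0 v hv
  exact ⟨hunique σ hσ, fun h ↦ h ▸ hzero⟩

theorem mul_apply_smul [AddCommGroup X] [Module ℝ X] (hs : IsNehariScaling G K D s) {u : X}
    (hu : u ∈ K) (hu0 : u ≠ 0) {v : Y} (hv : v ∈ D) {t : ℝ} (ht : 0 < t) (htu : t • u ∈ K) :
    t * s (t • u) v = s u v := by
  obtain ⟨hpos, hzero, -⟩ := hs (t • u) htu (smul_ne_zero ht.ne' hu0) v hv
  rw [smul_smul, mul_comm] at hzero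
  exact (hs.apply_smul_eq_zero_iff hu hu0 hv (mul_pos ht hpos)).mp hzero

theorem continuousOn_sphere [NormedAddCommGroup X] [NormedSpace ℝ X] [TopologicalSpace Y]
    [TopologicalSpace Z] [T1Space Z] (hs : IsNehariScaling G K D s)
    (hK : ∀ t : ℝ, 0 < t → ∀ u ∈ K, t • u ∈ K)
    (hG : ContinuousOn (fun p : X × Y ↦ G p.1 p.2) ((K \ {0}) ×ˢ D)) {m M : ℝ} (hm : 0 < m)
    (hbound : ∀ u ∈ K, ‖u‖ = 1 → ∀ v ∈ D, s u v ∈ Icc m M) :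
    ContinuousOn (fun p : X × Y ↦ s p.1 p.2) ((K ∩ Metric.sphere 0 1) ×ˢ D) := by
  have hne {u : X} (hu : u ∈ Metric.sphere (0 : X) 1) : u ≠ 0 :=
    ne_zero_of_mem_unit_sphere ⟨u, hu⟩
  have hpos {σ : ℝ} (hσ : σ ∈ Icc m M) : 0 < σ := hm.trans_le hσ.1
  have hΦ : ContinuousOn (fun q : (X × Y) × ℝ ↦ G (q.2 • q.1.1) q.1.2)
      (((K ∩ Metric.sphere 0 1) ×ˢ D) ×ˢ Icc m M) :=
    hG.comp (f := fun q : (X × Y) × ℝ ↦ (q.2 • q.1.1, q.1.2)) (by fun_prop)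
      fun _ ⟨⟨⟨hu, hu1⟩, hv⟩, hσ⟩ ↦
        ⟨⟨hK _ (hpos hσ) _ hu, smul_ne_zero (hpos hσ).ne' (hne hu1)⟩, hv⟩
  exact continuousOn_of_eq_iff_of_isCompact isCompact_Icc hΦ
    (fun _ ⟨⟨hu, hu1⟩, hv⟩ ↦ hbound _ hu (mem_sphere_zero_iff_norm.mp hu1) _ hv)
    fun _ ⟨⟨hu, hu1⟩, hv⟩ _ hσ ↦ hs.apply_smul_eq_zero_iff hu (hne hu1) hv (hpos hσ)

end IsNehariScaling

theorem nehari_scaling_continuous_general {X Y Z : Type*} [NormedAddCommGroup X] [NormedSpace ℝ X]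
    [TopologicalSpace Y] [TopologicalSpace Z] [T1Space Z] [Zero Z] {G : X → Y → Z} {K : Set X}
    {D : Set Y} {s : X → Y → ℝ} (hK : ∀ t : ℝ, 0 < t → ∀ u ∈ K, t • u ∈ K)
    (hG : ContinuousOn (fun p : X × Y ↦ G p.1 p.2) ((K \ {0}) ×ˢ D))
    (hs : IsNehariScaling G K D s) {m M : ℝ} (hm : 0 < m)
    (hbound : ∀ u ∈ K, ‖u‖ = 1 → ∀ v ∈ D, s u v ∈ Icc m M) :
    ContinuousOn (fun p : X × Y ↦ s p.1 p.2) ((K \ {0}) ×ˢ D) := by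
  have hinv_pos {u : X} (hu0 : u ≠ 0) : 0 < ‖u‖⁻¹ := inv_pos.mpr (norm_pos_iff.mpr hu0)
  have hinv : ContinuousOn (fun p : X × Y ↦ ‖p.1‖⁻¹) ((K \ {0}) ×ˢ D) :=
    continuous_fst.norm.continuousOn.inv₀ fun _ hp ↦ norm_ne_zero_iff.mpr hp.1.2
  have hnormalize : MapsTo (fun p : X × Y ↦ (‖p.1‖⁻¹ • p.1, p.2)) ((K \ {0}) ×ˢ D)
      ((K ∩ Metric.sphere 0 1) ×ˢ D) := fun _ ⟨⟨hu, hu0⟩, hv⟩ ↦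
    ⟨⟨hK _ (hinv_pos hu0) _ hu, mem_sphere_zero_iff_norm.mpr (norm_smul_inv_norm (𝕜 := ℝ) hu0)⟩, hv⟩
  have hsphere := (hs.continuousOn_sphere hK hG hm hbound).comp
    ((hinv.smul continuousOn_fst).prodMk continuousOn_snd) hnormalize
  refine (hinv.mul hsphere).congr fun _ ⟨⟨hu, hu0⟩, hv⟩ ↦ ?_
  exact (hs.mul_apply_smul hu hu0 hv (hinv_pos hu0) (hK _ (hinv_pos hu0) _ hu)).symm

theorem nehari_scaling_continuous
    {X₁ X₂ : Type*}
    [NormedAddCommGroup X₁] [NormedSpace ℝ X₁] [CompleteSpace X₁]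
    [NormedAddCommGroup X₂] [NormedSpace ℝ X₂] [CompleteSpace X₂]
    -- K₁ is a non-degenerate cone
    (K₁ : Set X₁) (hK₁closed : IsClosed K₁) (hK₁conv : Convex ℝ K₁)
    (hK₁cone : ∀ lam : ℝ, 0 ≤ lam → ∀ u ∈ K₁, lam • u ∈ K₁)
    (hK₁nondeg : ∃ u ∈ K₁, u ≠ 0)
    -- D is nonempty, bounded, closed, convex
    (D : Set X₂) (hDne : D.Nonempty) (hDbdd : Bornology.IsBounded D)
    (hDclosed : IsClosed D) (hDconv : Convex ℝ D)
    -- the operator T₁ : K₁ × D → K₁ is continuous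
    (T₁ : X₁ → X₂ → X₁) (hT₁maps : ∀ u ∈ K₁, ∀ v ∈ D, T₁ u v ∈ K₁)
    (hT₁cont : ContinuousOn (fun p : X₁ × X₂ => T₁ p.1 p.2) (K₁ ×ˢ D))
    -- the functional 𝓕 : K₁ × K₁ → ℝ, continuous, with 𝓕(λu,u)=0 ↔ λ=1
    (F : X₁ → X₁ → ℝ)
    (hFcont : ContinuousOn (fun p : X₁ × X₁ => F p.1 p.2) (K₁ ×ˢ K₁))
    (hF : ∀ u ∈ K₁, u ≠ 0 → ∀ lam : ℝ, 0 < lam → (F (lam • u) u = 0 ↔ lam = 1))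
    -- condition (h1): s(u,v) is the unique positive zero
    (s : X₁ → X₂ → ℝ)
    (h1 : ∀ u ∈ K₁, u ≠ 0 → ∀ v ∈ D,
      0 < s u v ∧ F (T₁ (s u v • u) v) (s u v • u) = 0 ∧
      ∀ σ : ℝ, 0 < σ → F (T₁ (σ • u) v) (σ • u) = 0 → σ = s u v)
    -- condition (h2): m < s < M on the unit sphere of the cone, times D
    (m M : ℝ) (hm : 0 < m) (hmM : m < M)
    (h2 : ∀ u ∈ K₁, ‖u‖ = 1 → ∀ v ∈ D, m < s u v ∧ s u v < M) :
    ContinuousOn (fun p : X₁ × X₂ => s p.1 p.2) ((K₁ \ {0}) ×ˢ D) := by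
  have hG : ContinuousOn (fun p : X₁ × X₂ ↦ F (T₁ p.1 p.2) p.1) (K₁ ×ˢ D) :=
    hFcont.comp (hT₁cont.prodMk continuousOn_fst) fun _ hp ↦ ⟨hT₁maps _ hp.1 _ hp.2, hp.1⟩
  exact nehari_scaling_continuous_general (G := fun u v ↦ F (T₁ u v) u)
    (fun t ht ↦ hK₁cone t ht.le) (hG.mono (prod_mono_left sdiff_subset)) h1 hm
    fun u hu hu1 v hv ↦ Ioo_subset_Icc_self (h2 u hu hu1 v hv)
end

section
/- Under assumptions (h1) and (h2), if (u_k, v_k) is a sequence in (K₁ \ {0}) × D converging to (0, v) for some v ∈ D, then s(u_k, v_k) → ∞ as k → ∞. -/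
/-!
Fix `y`. The point `s(x, y) • x` is where the ray through `x` meets the zero set of
`w ↦ F (T₁ w y) w`. A point `w ≠ 0` of this set in the cone lies on the ray through the unit vector
`w / ‖w‖` at distance `‖w‖`, so uniqueness forces `‖w‖ = s(w / ‖w‖, y)`. Hence the lower bound for
`s` on the unit sphere keeps the zero set away from the origin, and a factor that carries vectors
tending to `0` into it must blow up.
-/

open Filter Topology

theorem tendsto_norm_atTop_of_le_norm_smul {𝕜 E ι : Type*} [SeminormedRing 𝕜]
    [SeminormedAddCommGroup E] [Module 𝕜 E] [IsBoundedSMul 𝕜 E] {l : Filter ι}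
    {c : ι → 𝕜} {u : ι → E} {m : ℝ} (hm : 0 < m) (hle : ∀ᶠ i in l, m ≤ ‖c i • u i‖)
    (hu : Tendsto u l (𝓝 0)) : Tendsto (fun i => ‖c i‖) l atTop := by
  have hmul : ∀ᶠ i in l, m ≤ ‖c i‖ * ‖u i‖ :=
    hle.mono fun i hi => hi.trans (norm_smul_le (c i) (u i))
  have hpos : ∀ᶠ i in l, 0 < ‖u i‖ :=
    hmul.mono fun i hi => pos_of_mul_pos_right (hm.trans_le hi) (norm_nonneg (c i))
  have hnorm : Tendsto (fun i => ‖u i‖) l (𝓝[>] 0) :=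
    tendsto_nhdsWithin_iff.mpr ⟨tendsto_zero_iff_norm_tendsto_zero.mp hu, hpos⟩
  refine tendsto_atTop_mono' l ?_ (hnorm.inv_tendsto_nhdsGT_zero.const_mul_atTop hm)
  filter_upwards [hmul, hpos] with i hi hi0
  exact (mul_inv_le_iff₀ hi0).mpr hi

/-- `σ` is the only positive factor that scales `x` into the set `N`. For
`N = {w | F (T₁ w y) w = 0}` this is condition (h1) at `(x, y)`, with `σ = s(x, y)`. The conjunction
is arranged as in the hypothesis `h1` of `nehari_scaling_tendsto_atTop`. -/
def IsUniquePosScaling {E : Type*} [SMul ℝ E] (N : Set E) (x : E) (σ : ℝ) : Prop :=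
  0 < σ ∧ σ • x ∈ N ∧ ∀ τ : ℝ, 0 < τ → τ • x ∈ N → τ = σ

section

variable {E : Type*} [NormedAddCommGroup E] [NormedSpace ℝ E]

theorem IsUniquePosScaling.norm_eq {N : Set E} {w : E} {σ : ℝ}
    (h : IsUniquePosScaling N (‖w‖⁻¹ • w) σ) (hw0 : w ≠ 0) (hwN : w ∈ N) : ‖w‖ = σ := by
  obtain ⟨-, -, huniq⟩ := h
  refine huniq ‖w‖ (norm_pos_iff.mpr hw0) ?_
  rwa [smul_inv_smul₀ (norm_ne_zero_iff.mpr hw0)]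

theorem le_norm_of_mem_of_le_posScaling {K N : Set E} {σ : E → ℝ} {m : ℝ}
    (hK : ∀ c : ℝ, 0 < c → ∀ x ∈ K, c • x ∈ K)
    (hσ : ∀ x ∈ K, ‖x‖ = 1 → IsUniquePosScaling N x (σ x))
    (hmσ : ∀ x ∈ K, ‖x‖ = 1 → m ≤ σ x) {w : E} (hwK : w ∈ K) (hw0 : w ≠ 0) (hwN : w ∈ N) :
    m ≤ ‖w‖ := by
  have hmem : ‖w‖⁻¹ • w ∈ K := hK _ (inv_pos.mpr (norm_pos_iff.mpr hw0)) w hwK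
  have hunit : ‖‖w‖⁻¹ • w‖ = 1 := norm_smul_inv_norm (𝕜 := ℝ) hw0
  calc
    m ≤ σ (‖w‖⁻¹ • w) := hmσ _ hmem hunit
    _ = ‖w‖ := ((hσ _ hmem hunit).norm_eq hw0 hwN).symm

theorem nehari_scaling_tendsto_atTop_general {Y ι : Type*} {l : Filter ι} {K : Set E} {D : Set Y}
    {N : Y → Set E} {s : E → Y → ℝ} {m : ℝ} {u : ι → E} {v : ι → Y}
    (hK : ∀ c : ℝ, 0 < c → ∀ x ∈ K, c • x ∈ K)
    (hs : ∀ x ∈ K, x ≠ 0 → ∀ y ∈ D, IsUniquePosScaling (N y) x (s x y))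
    (hm : 0 < m) (hms : ∀ x ∈ K, ‖x‖ = 1 → ∀ y ∈ D, m ≤ s x y)
    (hu : ∀ᶠ i in l, u i ∈ K ∧ u i ≠ 0) (hv : ∀ᶠ i in l, v i ∈ D) (hulim : Tendsto u l (𝓝 0)) :
    Tendsto (fun i => s (u i) (v i)) l atTop := by
  have hscaling : ∀ᶠ i in l, IsUniquePosScaling (N (v i)) (u i) (s (u i) (v i)) := by
    filter_upwards [hu, hv] with i hui hvi using hs _ hui.1 hui.2 _ hvi
  have hfar : ∀ᶠ i in l, m ≤ ‖s (u i) (v i) • u i‖ := by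
    filter_upwards [hu, hv, hscaling] with i ⟨huK, hu0⟩ hvD ⟨hpos, hmem, _⟩
    exact le_norm_of_mem_of_le_posScaling hK
      (fun x hx hx1 => hs x hx (ne_zero_of_norm_ne_zero (hx1 ▸ one_ne_zero)) _ hvD)
      (fun x hx hx1 => hms x hx hx1 _ hvD) (hK _ hpos _ huK) (smul_ne_zero hpos.ne' hu0) hmem
  refine (tendsto_norm_atTop_of_le_norm_smul hm hfar hulim).congr' ?_
  exact hscaling.mono fun i hi => Real.norm_of_nonneg hi.1.le

end

theorem nehari_scaling_tendsto_atTop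
    {X₁ X₂ : Type*}
    [NormedAddCommGroup X₁] [NormedSpace ℝ X₁] [CompleteSpace X₁]
    [NormedAddCommGroup X₂] [NormedSpace ℝ X₂] [CompleteSpace X₂]
    -- K₁ is a non-degenerate cone
    (K₁ : Set X₁) (hK₁closed : IsClosed K₁) (hK₁conv : Convex ℝ K₁)
    (hK₁cone : ∀ lam : ℝ, 0 ≤ lam → ∀ u ∈ K₁, lam • u ∈ K₁)
    (hK₁nondeg : ∃ u ∈ K₁, u ≠ 0)
    -- D is nonempty, bounded, closed, convex
    (D : Set X₂) (hDne : D.Nonempty) (hDbdd : Bornology.IsBounded D)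
    (hDclosed : IsClosed D) (hDconv : Convex ℝ D)
    -- the operator T₁ : K₁ × D → K₁ is continuous
    (T₁ : X₁ → X₂ → X₁) (hT₁maps : ∀ u ∈ K₁, ∀ v ∈ D, T₁ u v ∈ K₁)
    (hT₁cont : ContinuousOn (fun p : X₁ × X₂ => T₁ p.1 p.2) (K₁ ×ˢ D))
    -- the functional 𝓕 : K₁ × K₁ → ℝ, continuous, with 𝓕(λu,u)=0 ↔ λ=1
    (F : X₁ → X₁ → ℝ)
    (hFcont : ContinuousOn (fun p : X₁ × X₁ => F p.1 p.2) (K₁ ×ˢ K₁))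
    (hF : ∀ u ∈ K₁, u ≠ 0 → ∀ lam : ℝ, 0 < lam → (F (lam • u) u = 0 ↔ lam = 1))
    -- condition (h1): s(u,v) is the unique positive zero
    (s : X₁ → X₂ → ℝ)
    (h1 : ∀ u ∈ K₁, u ≠ 0 → ∀ v ∈ D,
      0 < s u v ∧ F (T₁ (s u v • u) v) (s u v • u) = 0 ∧
      ∀ σ : ℝ, 0 < σ → F (T₁ (σ • u) v) (σ • u) = 0 → σ = s u v)
    -- condition (h2): m < s < M on the unit sphere of the cone, times D
    (m M : ℝ) (hm : 0 < m) (hmM : m < M)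
    (h2 : ∀ u ∈ K₁, ‖u‖ = 1 → ∀ v ∈ D, m < s u v ∧ s u v < M)
    -- the sequence (u_k, v_k) in (K₁ \ {0}) × D converging to (0, v)
    (u : ℕ → X₁) (v : ℕ → X₂)
    (hu : ∀ k, u k ∈ K₁ ∧ u k ≠ 0) (hv : ∀ k, v k ∈ D)
    (v₀ : X₂) (hv₀ : v₀ ∈ D)
    (hulim : Filter.Tendsto u Filter.atTop (nhds 0))
    (hvlim : Filter.Tendsto v Filter.atTop (nhds v₀)) :
    Filter.Tendsto (fun k => s (u k) (v k)) Filter.atTop Filter.atTop := by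
  exact nehari_scaling_tendsto_atTop_general (N := fun y => {w | F (T₁ w y) w = 0})
    (fun c hc => hK₁cone c hc.le) h1 hm (fun x hx hx1 y hy => (h2 x hx hx1 y hy).1.le)
    (.of_forall hu) (.of_forall hv) hulim
end

section
/- Under assumptions (h1) and (h2), the set U is open in the relative (subspace) topology of K₁ × D, and moreover U is a bounded subset of X₁ × X₂. -/
/-!
STATEMENT 3: Under assumptions (h1) and (h2), the set U is open in the relative
(subspace) topology of K₁ × D, and moreover U is a bounded subset of X₁ × X₂.
-/

/-- The set `U_b = {(u,v) ∈ (K₁ \ {0}) × D : s(u,v) = 1}`. -/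
def nehariUb {X₁ X₂ : Type*} [NormedAddCommGroup X₁] [NormedSpace ℝ X₁]
    [NormedAddCommGroup X₂] [NormedSpace ℝ X₂]
    (K₁ : Set X₁) (D : Set X₂) (s : X₁ → X₂ → ℝ) : Set (X₁ × X₂) :=
  {p : X₁ × X₂ | p.1 ∈ K₁ ∧ p.1 ≠ 0 ∧ p.2 ∈ D ∧ s p.1 p.2 = 1}

/-- The set `U = {(λ·u, v) : 0 ≤ λ < 1 and (u,v) ∈ U_b}`. -/
def nehariU {X₁ X₂ : Type*} [NormedAddCommGroup X₁] [NormedSpace ℝ X₁]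
    [NormedAddCommGroup X₂] [NormedSpace ℝ X₂]
    (K₁ : Set X₁) (D : Set X₂) (s : X₁ → X₂ → ℝ) : Set (X₁ × X₂) :=
  {q : X₁ × X₂ | ∃ lam : ℝ, 0 ≤ lam ∧ lam < 1 ∧
    ∃ p ∈ nehariUb K₁ D s, q = (lam • p.1, p.2)}

/-!
Every ray `{(σ • u, v) : σ > 0}` meets `U_b` exactly once, at `σ = s(u,v)`. So `U_b` is a radial
graph whose norms are the values of `s` on the unit sphere, and `(u,v) ∈ K × D` lies outside `U`
iff `(σ • u, v) ∈ U_b` for some `σ ∈ [0, 1]`. The lower bound on `s` keeps `U_b` away from `u = 0`,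
so continuity of `G` makes it closed in `K × D`; the complement of `U` is then the projection of a
closed set along the compact interval `[0, 1]`, hence closed as well.
-/

/-- `s` is the Nehari scaling of `G` over `(K \ {0}) × D`. This is condition (h1) of the paper, with
`G(u,v) = 𝓕(T₁(u,v), u)`; the values of `s` at `u = 0` are unconstrained. -/
structure IsNehariScaling_s3 {X Y : Type*} [Zero X] [SMul ℝ X] (K : Set X) (D : Set Y)
    (G : X → Y → ℝ) (s : X → Y → ℝ) : Prop where
  pos {u : X} (hu : u ∈ K) (hu0 : u ≠ 0) {v : Y} (hv : v ∈ D) : 0 < s u v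
  apply_smul_eq_zero {u : X} (hu : u ∈ K) (hu0 : u ≠ 0) {v : Y} (hv : v ∈ D) :
    G (s u v • u) v = 0
  eq_of_apply_smul_eq_zero {u : X} (hu : u ∈ K) (hu0 : u ≠ 0) {v : Y} (hv : v ∈ D) {σ : ℝ}
    (hσ : 0 < σ) (h : G (σ • u) v = 0) : σ = s u v

namespace IsNehariScaling_s3

section Module

variable {X Y : Type*} [AddCommGroup X] [Module ℝ X] {K : Set X} {D : Set Y}
  {G s : X → Y → ℝ} {u : X} {v : Y}

theorem eq_one_iff (hs : IsNehariScaling_s3 K D G s) (hu : u ∈ K) (hu0 : u ≠ 0) (hv : v ∈ D) :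
    s u v = 1 ↔ G u v = 0 := by
  constructor
  · intro h
    simpa only [h, one_smul] using hs.apply_smul_eq_zero hu hu0 hv
  · intro h
    exact (hs.eq_of_apply_smul_eq_zero hu hu0 hv one_pos (by rwa [one_smul])).symm

theorem apply_smul (hs : IsNehariScaling_s3 K D G s)
    (hK : ∀ c : ℝ, 0 ≤ c → ∀ u ∈ K, c • u ∈ K) (hu : u ∈ K) (hu0 : u ≠ 0) (hv : v ∈ D)
    {c : ℝ} (hc : 0 < c) : s (c • u) v = s u v / c := by
  have hcu : c • u ∈ K := hK c hc.le u hu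
  have hcu0 : c • u ≠ 0 := smul_ne_zero hc.ne' hu0
  rw [eq_div_iff hc.ne']
  refine hs.eq_of_apply_smul_eq_zero hu hu0 hv (mul_pos (hs.pos hcu hcu0 hv) hc) ?_
  rw [mul_smul]
  exact hs.apply_smul_eq_zero hcu hcu0 hv

end Module

variable {X₁ X₂ : Type*} [NormedAddCommGroup X₁] [NormedSpace ℝ X₁]
  [NormedAddCommGroup X₂] [NormedSpace ℝ X₂] {K : Set X₁} {D : Set X₂}
  {G s : X₁ → X₂ → ℝ} {u : X₁} {v : X₂}

theorem smul_mem_nehariUb_iff (hs : IsNehariScaling_s3 K D G s)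
    (hK : ∀ c : ℝ, 0 ≤ c → ∀ u ∈ K, c • u ∈ K) (hu : u ∈ K) (hu0 : u ≠ 0) (hv : v ∈ D)
    {σ : ℝ} (hσ : 0 ≤ σ) : (σ • u, v) ∈ nehariUb K D s ↔ σ = s u v := by
  have hpos : 0 < s u v := hs.pos hu hu0 hv
  constructor
  · rintro ⟨-, hσu0, -, h⟩
    have hσ' : 0 < σ := hσ.lt_of_ne' (left_ne_zero_of_smul hσu0)
    rw [hs.apply_smul hK hu hu0 hv hσ', div_eq_one_iff_eq hσ'.ne'] at h
    exact h.symm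
  · rintro rfl
    refine ⟨hK _ hσ u hu, smul_ne_zero hpos.ne' hu0, hv, ?_⟩
    rw [hs.apply_smul hK hu hu0 hv hpos, div_self hpos.ne']

theorem norm_eq_of_mem_nehariUb (hs : IsNehariScaling_s3 K D G s)
    (hK : ∀ c : ℝ, 0 ≤ c → ∀ u ∈ K, c • u ∈ K) (h : (u, v) ∈ nehariUb K D s) :
    ‖u‖ = s (‖u‖⁻¹ • u) v := by
  obtain ⟨hu, hu0, hv, -⟩ := id h
  have hnorm : 0 < ‖u‖ := norm_pos_iff.mpr hu0
  refine (hs.smul_mem_nehariUb_iff hK (hK _ (inv_pos.mpr hnorm).le u hu)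
    (smul_ne_zero (inv_pos.mpr hnorm).ne' hu0) hv hnorm.le).mp ?_
  rwa [smul_inv_smul₀ hnorm.ne']

theorem norm_mem_of_mem_nehariUb (hs : IsNehariScaling_s3 K D G s)
    (hK : ∀ c : ℝ, 0 ≤ c → ∀ u ∈ K, c • u ∈ K) {R : Set ℝ}
    (hR : ∀ u ∈ K, ‖u‖ = 1 → ∀ v ∈ D, s u v ∈ R) (h : (u, v) ∈ nehariUb K D s) : ‖u‖ ∈ R := by
  obtain ⟨hu, hu0, hv, -⟩ := id h
  rw [hs.norm_eq_of_mem_nehariUb hK h]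
  exact hR _ (hK _ (inv_nonneg.mpr (norm_nonneg u)) u hu) (norm_smul_inv_norm (𝕜 := ℝ) hu0) v hv

theorem mem_nehariU_iff (hs : IsNehariScaling_s3 K D G s)
    (hK : ∀ c : ℝ, 0 ≤ c → ∀ u ∈ K, c • u ∈ K) (hu : u ∈ K) (hu0 : u ≠ 0) (hv : v ∈ D) :
    (u, v) ∈ nehariU K D s ↔ 1 < s u v := by
  have hpos : 0 < s u v := hs.pos hu hu0 hv
  constructor
  · rintro ⟨c, hc, hc1, ⟨w, _⟩, hw, huw⟩
    obtain ⟨rfl, rfl⟩ := Prod.mk.inj huw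
    have hc0 : 0 < c := hc.lt_of_ne' (left_ne_zero_of_smul hu0)
    have hsw : c⁻¹ = s (c • w) v := by
      refine (hs.smul_mem_nehariUb_iff hK hu hu0 hv (inv_pos.mpr hc0).le).mp ?_
      rwa [inv_smul_smul₀ hc0.ne']
    rw [← hsw]
    exact (one_lt_inv₀ hc0).mpr hc1
  · intro h
    refine ⟨(s u v)⁻¹, (inv_pos.mpr hpos).le, inv_lt_one_of_one_lt₀ h, (s u v • u, v),
      (hs.smul_mem_nehariUb_iff hK hu hu0 hv hpos.le).mpr rfl, ?_⟩
    rw [inv_smul_smul₀ hpos.ne']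

theorem zero_mem_nehariU (hs : IsNehariScaling_s3 K D G s)
    (hK : ∀ c : ℝ, 0 ≤ c → ∀ u ∈ K, c • u ∈ K) (hKnondeg : ∃ u ∈ K, u ≠ 0) (hv : v ∈ D) :
    ((0 : X₁), v) ∈ nehariU K D s := by
  obtain ⟨u, hu, hu0⟩ := hKnondeg
  exact ⟨0, le_rfl, one_pos, (s u v • u, v),
    (hs.smul_mem_nehariUb_iff hK hu hu0 hv (hs.pos hu hu0 hv).le).mpr rfl, by rw [zero_smul]⟩

theorem notMem_nehariU_iff (hs : IsNehariScaling_s3 K D G s)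
    (hK : ∀ c : ℝ, 0 ≤ c → ∀ u ∈ K, c • u ∈ K) (hKnondeg : ∃ u ∈ K, u ≠ 0)
    (hu : u ∈ K) (hv : v ∈ D) :
    (u, v) ∉ nehariU K D s ↔ ∃ σ : unitInterval, ((σ : ℝ) • u, v) ∈ nehariUb K D s := by
  rcases eq_or_ne u 0 with rfl | hu0
  · refine iff_of_false (not_not_intro (hs.zero_mem_nehariU hK hKnondeg hv)) ?_
    rintro ⟨σ, -, hne, -⟩
    exact hne (smul_zero _)
  · rw [hs.mem_nehariU_iff hK hu hu0 hv, not_lt]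
    constructor
    · intro h
      have hpos : 0 < s u v := hs.pos hu hu0 hv
      exact ⟨⟨s u v, hpos.le, h⟩, (hs.smul_mem_nehariUb_iff hK hu hu0 hv hpos.le).mpr rfl⟩
    · rintro ⟨σ, hσ⟩
      rw [← (hs.smul_mem_nehariUb_iff hK hu hu0 hv σ.2.1).mp hσ]
      exact σ.2.2

theorem isClosed_preimage_val_nehariUb (hs : IsNehariScaling_s3 K D G s)
    (hK : ∀ c : ℝ, 0 ≤ c → ∀ u ∈ K, c • u ∈ K)
    (hG : ContinuousOn (Function.uncurry G) (K ×ˢ D)) {m : ℝ} (hm : 0 < m)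
    (hms : ∀ u ∈ K, ‖u‖ = 1 → ∀ v ∈ D, m ≤ s u v) :
    IsClosed (Subtype.val ⁻¹' nehariUb K D s : Set (K ×ˢ D)) := by
  have heq : (Subtype.val ⁻¹' nehariUb K D s : Set (K ×ˢ D)) =
      {p | m ≤ ‖p.1.1‖} ∩ {p | Function.uncurry G p.1 = 0} := by
    ext ⟨⟨u, v⟩, hu, hv⟩
    constructor
    · intro h
      exact ⟨hs.norm_mem_of_mem_nehariUb (R := Set.Ici m) hK hms h,
        (hs.eq_one_iff hu h.2.1 hv).mp h.2.2.2⟩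
    · rintro ⟨hmu, hG0⟩
      have hu0 : u ≠ 0 := norm_pos_iff.mp (hm.trans_le hmu)
      exact ⟨hu, hu0, hv, (hs.eq_one_iff hu hu0 hv).mpr hG0⟩
  rw [heq]
  exact (isClosed_le continuous_const (by fun_prop)).inter
    (isClosed_eq hG.domRestrict continuous_const)

theorem isOpen_preimage_val_nehariU (hs : IsNehariScaling_s3 K D G s)
    (hK : ∀ c : ℝ, 0 ≤ c → ∀ u ∈ K, c • u ∈ K) (hKnondeg : ∃ u ∈ K, u ≠ 0)
    (hclosed : IsClosed (Subtype.val ⁻¹' nehariUb K D s : Set (K ×ˢ D))) :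
    IsOpen (Subtype.val ⁻¹' nehariU K D s : Set (K ×ˢ D)) := by
  let scale : unitInterval × (K ×ˢ D : Set (X₁ × X₂)) → (K ×ˢ D : Set (X₁ × X₂)) :=
    fun q ↦ ⟨((q.1 : ℝ) • q.2.1.1, q.2.1.2), hK _ q.1.2.1 _ q.2.2.1, q.2.2.2⟩
  have hscale : Continuous scale := by fun_prop
  have hcompl : (Subtype.val ⁻¹' nehariU K D s : Set (K ×ˢ D))ᶜ =
      Prod.snd '' (scale ⁻¹' (Subtype.val ⁻¹' nehariUb K D s)) := by
    ext p
    refine (hs.notMem_nehariU_iff hK hKnondeg p.2.1 p.2.2).trans ⟨?_, ?_⟩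
    · rintro ⟨σ, hσ⟩
      exact ⟨(σ, p), hσ, rfl⟩
    · rintro ⟨⟨σ, _⟩, hσ, rfl⟩
      exact ⟨σ, hσ⟩
  rw [← isClosed_compl_iff, hcompl]
  exact isClosedMap_snd_of_compactSpace _ (hclosed.preimage hscale)

end IsNehariScaling_s3

section nehariU

variable {X₁ X₂ : Type*} [NormedAddCommGroup X₁] [NormedSpace ℝ X₁]
  [NormedAddCommGroup X₂] [NormedSpace ℝ X₂] {K : Set X₁} {D : Set X₂} {s : X₁ → X₂ → ℝ}

theorem nehariU_subset_prod (hK : ∀ c : ℝ, 0 ≤ c → ∀ u ∈ K, c • u ∈ K) :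
    nehariU K D s ⊆ K ×ˢ D := by
  rintro _ ⟨c, hc, -, p, hp, rfl⟩
  exact ⟨hK c hc p.1 hp.1, hp.2.2.1⟩

theorem isBounded_nehariU (hD : Bornology.IsBounded D) {M : ℝ}
    (hM : ∀ p ∈ nehariUb K D s, ‖p.1‖ ≤ M) : Bornology.IsBounded (nehariU K D s) := by
  refine ((Metric.isBounded_closedBall (x := (0 : X₁)) (r := M)).prod hD).subset ?_
  rintro _ ⟨c, hc, hc1, p, hp, rfl⟩
  refine ⟨mem_closedBall_zero_iff.mpr ?_, hp.2.2.1⟩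
  calc ‖c • p.1‖ = c * ‖p.1‖ := norm_smul_of_nonneg hc p.1
    _ ≤ ‖p.1‖ := mul_le_of_le_one_left (norm_nonneg _) hc1.le
    _ ≤ M := hM p hp

end nehariU

theorem nehariU_relatively_open_and_bounded_general
    {X₁ X₂ : Type*} [NormedAddCommGroup X₁] [NormedSpace ℝ X₁]
    [NormedAddCommGroup X₂] [NormedSpace ℝ X₂]
    {K : Set X₁} (hK : ∀ c : ℝ, 0 ≤ c → ∀ u ∈ K, c • u ∈ K) (hKnondeg : ∃ u ∈ K, u ≠ 0)
    {D : Set X₂} (hD : Bornology.IsBounded D)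
    {G : X₁ → X₂ → ℝ} (hG : ContinuousOn (Function.uncurry G) (K ×ˢ D))
    {s : X₁ → X₂ → ℝ} (hs : IsNehariScaling_s3 K D G s)
    {m M : ℝ} (hm : 0 < m) (hmM : ∀ u ∈ K, ‖u‖ = 1 → ∀ v ∈ D, s u v ∈ Set.Icc m M) :
    (∃ V : Set (X₁ × X₂), IsOpen V ∧ nehariU K D s = V ∩ (K ×ˢ D)) ∧
      Bornology.IsBounded (nehariU K D s) := by
  have hclosed : IsClosed (Subtype.val ⁻¹' nehariUb K D s : Set (K ×ˢ D)) :=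
    hs.isClosed_preimage_val_nehariUb hK hG hm fun u hu hu1 v hv ↦ (hmM u hu hu1 v hv).1
  obtain ⟨V, hV, hVU⟩ :=
    isOpen_induced_iff.mp (hs.isOpen_preimage_val_nehariU hK hKnondeg hclosed)
  refine ⟨⟨V, hV, ?_⟩,
    isBounded_nehariU hD fun p hp ↦ (hs.norm_mem_of_mem_nehariUb hK hmM hp).2⟩
  rw [Subtype.preimage_coe_eq_preimage_coe_iff,
    Set.inter_eq_right.mpr (nehariU_subset_prod hK)] at hVU
  rw [← hVU, Set.inter_comm]

theorem nehariU_relatively_open_and_bounded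
    {X₁ X₂ : Type*}
    [NormedAddCommGroup X₁] [NormedSpace ℝ X₁] [CompleteSpace X₁]
    [NormedAddCommGroup X₂] [NormedSpace ℝ X₂] [CompleteSpace X₂]
    -- K₁ is a non-degenerate cone
    (K₁ : Set X₁) (hK₁closed : IsClosed K₁) (hK₁conv : Convex ℝ K₁)
    (hK₁cone : ∀ lam : ℝ, 0 ≤ lam → ∀ u ∈ K₁, lam • u ∈ K₁)
    (hK₁nondeg : ∃ u ∈ K₁, u ≠ 0)
    -- D is nonempty, bounded, closed, convex
    (D : Set X₂) (hDne : D.Nonempty) (hDbdd : Bornology.IsBounded D)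
    (hDclosed : IsClosed D) (hDconv : Convex ℝ D)
    -- the operator T₁ : K₁ × D → K₁ is continuous
    (T₁ : X₁ → X₂ → X₁) (hT₁maps : ∀ u ∈ K₁, ∀ v ∈ D, T₁ u v ∈ K₁)
    (hT₁cont : ContinuousOn (fun p : X₁ × X₂ => T₁ p.1 p.2) (K₁ ×ˢ D))
    -- the functional 𝓕 : K₁ × K₁ → ℝ, continuous, with 𝓕(λu,u)=0 ↔ λ=1
    (F : X₁ → X₁ → ℝ)
    (hFcont : ContinuousOn (fun p : X₁ × X₁ => F p.1 p.2) (K₁ ×ˢ K₁))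
    (hF : ∀ u ∈ K₁, u ≠ 0 → ∀ lam : ℝ, 0 < lam → (F (lam • u) u = 0 ↔ lam = 1))
    -- condition (h1): s(u,v) is the unique positive zero
    (s : X₁ → X₂ → ℝ)
    (h1 : ∀ u ∈ K₁, u ≠ 0 → ∀ v ∈ D,
      0 < s u v ∧ F (T₁ (s u v • u) v) (s u v • u) = 0 ∧
      ∀ σ : ℝ, 0 < σ → F (T₁ (σ • u) v) (σ • u) = 0 → σ = s u v)
    -- condition (h2): m < s < M on the unit sphere of the cone, times D
    (m M : ℝ) (hm : 0 < m) (hmM : m < M)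
    (h2 : ∀ u ∈ K₁, ‖u‖ = 1 → ∀ v ∈ D, m < s u v ∧ s u v < M) :
    (∃ V : Set (X₁ × X₂), IsOpen V ∧ nehariU K₁ D s = V ∩ (K₁ ×ˢ D)) ∧
      Bornology.IsBounded (nehariU K₁ D s) := by
  have hG : ContinuousOn (Function.uncurry fun u v ↦ F (T₁ u v) u) (K₁ ×ˢ D) :=
    hFcont.comp (hT₁cont.prodMk continuousOn_fst) fun p hp ↦ ⟨hT₁maps _ hp.1 _ hp.2, hp.1⟩
  have hs : IsNehariScaling_s3 K₁ D (fun u v ↦ F (T₁ u v) u) s :=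
    { pos := fun hu hu0 _ hv ↦ (h1 _ hu hu0 _ hv).1
      apply_smul_eq_zero := fun hu hu0 _ hv ↦ (h1 _ hu hu0 _ hv).2.1
      eq_of_apply_smul_eq_zero := fun hu hu0 _ hv ↦ (h1 _ hu hu0 _ hv).2.2 _ }
  exact nehariU_relatively_open_and_bounded_general hK₁cone hK₁nondeg hDbdd hG hs hm
    fun u hu hu1 v hv ↦ ⟨(h2 u hu hu1 v hv).1.le, (h2 u hu hu1 v hv).2.le⟩
end

section
/- Under assumptions (h1) and (h2), the boundary of U relative to the subspace topology of K₁ × D equals U_b, i.e. ∂U = U_b. -/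
/-!
The reciprocal of `s`, extended by `0` to `u = 0`, is positively homogeneous of degree one in `u`;
`U` and `U_b` are the sets where this gauge is `< 1` and `= 1`. By (h2) the gauge is comparable to
`‖u‖`, hence continuous at `u = 0`. Away from `0`, (h2) confines `s u v * ‖u‖` to a compact interval
in which it is the only solution of an equation depending continuously on `(u, v)`, so it is
continuous. Finally, every point of `U_b` is the limit of points of `U` along its ray.
-/

open Filter Set Topology

theorem continuousOn_of_isCompact_of_eq_iff {X Y Z : Type*} [TopologicalSpace X]
    [TopologicalSpace Y] [TopologicalSpace Z] [T1Space Z] {S : Set X} {C : Set Y}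
    (hC : IsCompact C) {f : X → Y} (hf : MapsTo f S C) {Φ : X × Y → Z} {z : Z}
    (hΦ : ContinuousOn Φ (S ×ˢ C)) (hfΦ : ∀ x ∈ S, ∀ y ∈ C, Φ (x, y) = z ↔ y = f x) :
    ContinuousOn f S := by
  intro x hx
  have hmem : ∀ᶠ x' in 𝓝[S] x, x' ∈ S := self_mem_nhdsWithin
  refine hC.tendsto_nhds_of_unique_mapClusterPt (hmem.mono hf) fun y hy hcluster => ?_
  obtain ⟨l, hl, hfl⟩ := mapClusterPt_iff_ultrafilter.1 hcluster
  have hgraph : Tendsto (fun x' => (x', f x')) l (𝓝[S ×ˢ C] (x, y)) :=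
    tendsto_nhdsWithin_iff.2
      ⟨(tendsto_id'.2 (hl.trans nhdsWithin_le_nhds)).prodMk_nhds hfl,
        hl (hmem.mono fun x' hx' => ⟨hx', hf hx'⟩)⟩
  have hconst : ∀ᶠ x' in l, Φ (x', f x') = z :=
    hl (hmem.mono fun x' hx' => (hfΦ x' hx' _ (hf hx')).2 rfl)
  have hlim : Tendsto (fun _ => z) (l : Filter X) (𝓝 (Φ (x, y))) :=
    ((hΦ (x, y) ⟨hx, hy⟩).tendsto.comp hgraph).congr' hconst
  exact (hfΦ x hx y hy).1 (tendsto_const_nhds_iff.1 hlim).symm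

theorem frontier_setOf_lt_eq_of_homogeneous {E Y : Type*} [TopologicalSpace E] [MulAction ℝ E]
    [ContinuousSMul ℝ E] [TopologicalSpace Y] {K : Set E} {D : Set Y}
    (hK : ∀ c : ℝ, 0 < c → ∀ u ∈ K, c • u ∈ K) {g : E × Y → ℝ} (hg : ContinuousOn g (K ×ˢ D))
    (hsmul : ∀ c : ℝ, 0 < c → ∀ u ∈ K, ∀ v ∈ D, g (c • u, v) = c * g (u, v))
    {a : ℝ} (ha : 0 < a) :
    frontier {p : ↥(K ×ˢ D) | g p < a} = {p : ↥(K ×ˢ D) | g p = a} := by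
  have hg' : Continuous fun p : ↥(K ×ˢ D) => g p := hg.domRestrict
  refine (frontier_lt_subset_eq hg' continuous_const).antisymm ?_
  rintro ⟨⟨u, v⟩, hu, hv⟩ (hp : g (u, v) = a)
  rw [(isOpen_lt hg' continuous_const).frontier_eq]
  refine ⟨closure_subtype.2 ?_, hp.not_lt⟩
  have hray : Tendsto (fun c : ℝ => (c • u, v)) (𝓝[<] 1) (𝓝 (u, v)) := by
    have : Continuous fun c : ℝ => (c • u, v) := by fun_prop
    simpa using (this.tendsto 1).mono_left nhdsWithin_le_nhds
  refine mem_closure_of_tendsto hray ?_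
  filter_upwards [Ioo_mem_nhdsLT (zero_lt_one' ℝ)] with c ⟨hc₀, hc₁⟩
  refine ⟨⟨(c • u, v), hK c hc₀ u hu, hv⟩, ?_, rfl⟩
  calc g (c • u, v) = c * a := by rw [hsmul c hc₀ u hu v hv, hp]
    _ < a := mul_lt_of_lt_one_left ha hc₁

section Gauge

variable {X₁ X₂ : Type*} [Zero X₁]

open Classical in
/-- The gauge in the variable `u` of the set `U` determined by `s`, namely `1 / s u v`. It is set to
`0` at `u = 0`, where `s` carries no information. -/
noncomputable def nehariGauge (s : X₁ → X₂ → ℝ) (p : X₁ × X₂) : ℝ :=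
  if p.1 = 0 then 0 else (s p.1 p.2)⁻¹

theorem nehariGauge_zero (s : X₁ → X₂ → ℝ) (v : X₂) : nehariGauge s (0, v) = 0 :=
  if_pos rfl

theorem nehariGauge_of_ne_zero (s : X₁ → X₂ → ℝ) {u : X₁} (hu : u ≠ 0) (v : X₂) :
    nehariGauge s (u, v) = (s u v)⁻¹ :=
  if_neg hu

end Gauge

section Homogeneity

variable {X₁ X₂ : Type*} [AddCommGroup X₁] [Module ℝ X₁] {K : Set X₁} {D : Set X₂}
  {G : X₁ → X₂ → ℝ} {s : X₁ → X₂ → ℝ} {u : X₁} {v : X₂} {c : ℝ}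

/-- Condition (h1) for `G u v = 𝓕 (T₁ u v) u`: for nonzero `u ∈ K` and `v ∈ D`, the number `s u v`
is the unique positive zero of `σ ↦ G (σ • u) v`. The values of `s` elsewhere are unconstrained. -/
def IsNehariScale (K : Set X₁) (D : Set X₂) (G s : X₁ → X₂ → ℝ) : Prop :=
  ∀ u ∈ K, u ≠ 0 → ∀ v ∈ D,
    0 < s u v ∧ G (s u v • u) v = 0 ∧ ∀ σ : ℝ, 0 < σ → G (σ • u) v = 0 → σ = s u v

namespace IsNehariScale

theorem pos (hs : IsNehariScale K D G s) (hu : u ∈ K) (hu₀ : u ≠ 0) (hv : v ∈ D) : 0 < s u v :=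
  (hs u hu hu₀ v hv).1

theorem eq_zero_iff (hs : IsNehariScale K D G s) (hu : u ∈ K) (hu₀ : u ≠ 0) (hv : v ∈ D)
    (hc : 0 < c) : G (c • u) v = 0 ↔ c = s u v :=
  ⟨(hs u hu hu₀ v hv).2.2 c hc, fun h => h ▸ (hs u hu hu₀ v hv).2.1⟩

theorem scale_smul (hs : IsNehariScale K D G s) (hK : ∀ c : ℝ, 0 < c → ∀ u ∈ K, c • u ∈ K)
    (hu : u ∈ K) (hu₀ : u ≠ 0) (hv : v ∈ D) (hc : 0 < c) : s (c • u) v = s u v / c := by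
  have hpos : 0 < s u v / c := div_pos (hs.pos hu hu₀ hv) hc
  refine ((hs.eq_zero_iff (hK c hc u hu) (smul_ne_zero hc.ne' hu₀) hv hpos).1 ?_).symm
  rw [smul_smul, div_mul_cancel₀ _ hc.ne']
  exact (hs.eq_zero_iff hu hu₀ hv (hs.pos hu hu₀ hv)).2 rfl

theorem nehariGauge_smul (hs : IsNehariScale K D G s)
    (hK : ∀ c : ℝ, 0 < c → ∀ u ∈ K, c • u ∈ K) (hu : u ∈ K) (hv : v ∈ D) (hc : 0 < c) :
    nehariGauge s (c • u, v) = c * nehariGauge s (u, v) := by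
  rcases eq_or_ne u 0 with rfl | hu₀
  · simp [nehariGauge_zero]
  · rw [nehariGauge_of_ne_zero s (smul_ne_zero hc.ne' hu₀), nehariGauge_of_ne_zero s hu₀,
      hs.scale_smul hK hu hu₀ hv hc, inv_div, div_eq_mul_inv]

theorem nehariGauge_nonneg (hs : IsNehariScale K D G s) (hu : u ∈ K) (hv : v ∈ D) :
    0 ≤ nehariGauge s (u, v) := by
  rcases eq_or_ne u 0 with rfl | hu₀
  · exact (nehariGauge_zero s v).ge
  · rw [nehariGauge_of_ne_zero s hu₀]
    exact (inv_pos.2 (hs.pos hu hu₀ hv)).le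

end IsNehariScale

end Homogeneity

section Continuity

variable {X₁ X₂ : Type*} [NormedAddCommGroup X₁] [NormedSpace ℝ X₁] {K : Set X₁} {D : Set X₂}
  {G : X₁ → X₂ → ℝ} {s : X₁ → X₂ → ℝ} {m M : ℝ} {u : X₁} {v : X₂}

namespace IsNehariScale

theorem scale_mul_norm_mem (hs : IsNehariScale K D G s)
    (hK : ∀ c : ℝ, 0 < c → ∀ u ∈ K, c • u ∈ K) {I : Set ℝ}
    (hbound : ∀ u ∈ K, ‖u‖ = 1 → ∀ v ∈ D, s u v ∈ I)
    (hu : u ∈ K) (hu₀ : u ≠ 0) (hv : v ∈ D) : s u v * ‖u‖ ∈ I := by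
  have hnorm : 0 < ‖u‖⁻¹ := inv_pos.2 (norm_pos_iff.2 hu₀)
  have hunit := hbound (‖u‖⁻¹ • u) (hK _ hnorm u hu) (norm_smul_inv_norm (𝕜 := ℝ) hu₀) v hv
  rwa [hs.scale_smul hK hu hu₀ hv hnorm, div_inv_eq_mul] at hunit

theorem nehariGauge_le_norm_div (hs : IsNehariScale K D G s)
    (hK : ∀ c : ℝ, 0 < c → ∀ u ∈ K, c • u ∈ K) (hm : 0 < m)
    (hbound : ∀ u ∈ K, ‖u‖ = 1 → ∀ v ∈ D, m ≤ s u v) (hu : u ∈ K) (hv : v ∈ D) :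
    nehariGauge s (u, v) ≤ ‖u‖ / m := by
  rcases eq_or_ne u 0 with rfl | hu₀
  · simp [nehariGauge_zero]
  · rw [nehariGauge_of_ne_zero s hu₀, le_div_iff₀ hm, inv_mul_le_iff₀ (hs.pos hu hu₀ hv)]
    exact hs.scale_mul_norm_mem hK (I := Ici m) hbound hu hu₀ hv

variable [TopologicalSpace X₂]

theorem continuousOn_scale_mul_norm (hs : IsNehariScale K D G s)
    (hK : ∀ c : ℝ, 0 < c → ∀ u ∈ K, c • u ∈ K)
    (hG : ContinuousOn (fun p : X₁ × X₂ => G p.1 p.2) ((K \ {0}) ×ˢ D)) (hm : 0 < m)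
    (hbound : ∀ u ∈ K, ‖u‖ = 1 → ∀ v ∈ D, s u v ∈ Icc m M) :
    ContinuousOn (fun p : X₁ × X₂ => s p.1 p.2 * ‖p.1‖) ((K \ {0}) ×ˢ D) := by
  have hdiv : ∀ u : X₁, u ≠ 0 → ∀ r ∈ Icc m M, 0 < r / ‖u‖ := fun u hu₀ r hr =>
    div_pos (hm.trans_le hr.1) (norm_pos_iff.2 hu₀)
  have hrescale : ContinuousOn (fun q : (X₁ × X₂) × ℝ => ((q.2 / ‖q.1.1‖) • q.1.1, q.1.2))
      (((K \ {0}) ×ˢ D) ×ˢ Icc m M) := by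
    refine ContinuousOn.prodMk (ContinuousOn.smul ?_ (by fun_prop)) (by fun_prop)
    exact ContinuousOn.div (by fun_prop) (by fun_prop) fun q hq => norm_ne_zero_iff.2 hq.1.1.2
  refine continuousOn_of_isCompact_of_eq_iff isCompact_Icc
    (fun p hp => hs.scale_mul_norm_mem hK hbound hp.1.1 hp.1.2 hp.2)
    (hG.comp hrescale fun q hq => ?_) (z := 0) ?_
  · obtain ⟨⟨⟨hu, hu₀⟩, hv⟩, hr⟩ := hq
    have hpos := hdiv _ hu₀ _ hr
    exact ⟨⟨hK _ hpos _ hu, smul_ne_zero hpos.ne' hu₀⟩, hv⟩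
  · rintro ⟨u, v⟩ ⟨⟨hu, hu₀⟩, hv⟩ r hr
    exact (hs.eq_zero_iff hu hu₀ hv (hdiv u hu₀ r hr)).trans
      (div_eq_iff (norm_ne_zero_iff.2 hu₀))

theorem continuousOn_nehariGauge (hs : IsNehariScale K D G s)
    (hK : ∀ c : ℝ, 0 < c → ∀ u ∈ K, c • u ∈ K)
    (hG : ContinuousOn (fun p : X₁ × X₂ => G p.1 p.2) ((K \ {0}) ×ˢ D)) (hm : 0 < m)
    (hbound : ∀ u ∈ K, ‖u‖ = 1 → ∀ v ∈ D, s u v ∈ Icc m M) :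
    ContinuousOn (nehariGauge s) (K ×ˢ D) := by
  rintro ⟨u, v⟩ ⟨hu, hv⟩
  rcases eq_or_ne u 0 with rfl | hu₀
  · have hnorm : Tendsto (fun p : X₁ × X₂ => ‖p.1‖ / m) (𝓝[K ×ˢ D] (0, v)) (𝓝 0) := by
      have : Continuous fun p : X₁ × X₂ => ‖p.1‖ / m := by fun_prop
      simpa using (this.tendsto (0, v)).mono_left nhdsWithin_le_nhds
    rw [ContinuousWithinAt, nehariGauge_zero]
    refine squeeze_zero' ?_ ?_ hnorm <;> filter_upwards [self_mem_nhdsWithin] with p hp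
    · exact hs.nehariGauge_nonneg hp.1 hp.2
    · exact hs.nehariGauge_le_norm_div hK hm (fun u hu hnorm v hv => (hbound u hu hnorm v hv).1)
        hp.1 hp.2
  · have hquot : ContinuousOn (nehariGauge s) ((K \ {0}) ×ˢ D) := by
      have hden := hs.continuousOn_scale_mul_norm hK hG hm hbound
      refine (continuousOn_fst.norm.div hden ?_).congr ?_
      · rintro ⟨u, v⟩ ⟨⟨hu, hu₀⟩, hv⟩
        exact (mul_pos (hs.pos hu hu₀ hv) (norm_pos_iff.2 hu₀)).ne'
      · rintro ⟨u, v⟩ ⟨⟨-, hu₀⟩, -⟩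
        exact (nehariGauge_of_ne_zero s hu₀ v).trans
          (div_mul_cancel_right₀ (norm_ne_zero_iff.2 hu₀) _).symm
    refine (hquot (u, v) ⟨⟨hu, hu₀⟩, hv⟩).mono_of_mem_nhdsWithin ?_
    have hne : ∀ᶠ p : X₁ × X₂ in 𝓝[K ×ˢ D] (u, v), p.1 ≠ 0 :=
      continuous_fst.continuousWithinAt.eventually_ne hu₀
    filter_upwards [hne, self_mem_nhdsWithin] with p hp₀ hp
    exact ⟨⟨hp.1, hp₀⟩, hp.2⟩

end IsNehariScale

end Continuity

section Boundary

variable {X₁ X₂ : Type*} [NormedAddCommGroup X₁] [NormedSpace ℝ X₁] [NormedAddCommGroup X₂]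
  [NormedSpace ℝ X₂] {K : Set X₁} {D : Set X₂} {G : X₁ → X₂ → ℝ} {s : X₁ → X₂ → ℝ}
  {u : X₁} {v : X₂}

theorem mem_nehariUb_iff_nehariGauge_eq_one (hu : u ∈ K) (hv : v ∈ D) :
    (u, v) ∈ nehariUb K D s ↔ nehariGauge s (u, v) = 1 := by
  rcases eq_or_ne u 0 with rfl | hu₀
  · simp [nehariUb, nehariGauge_zero]
  · simp [nehariUb, nehariGauge_of_ne_zero s hu₀, hu, hu₀, hv]

namespace IsNehariScale

theorem smul_mem_nehariUb (hs : IsNehariScale K D G s)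
    (hK : ∀ c : ℝ, 0 < c → ∀ u ∈ K, c • u ∈ K) (hu : u ∈ K) (hu₀ : u ≠ 0) (hv : v ∈ D) :
    (s u v • u, v) ∈ nehariUb K D s := by
  have hpos := hs.pos hu hu₀ hv
  refine ⟨hK _ hpos u hu, smul_ne_zero hpos.ne' hu₀, hv, ?_⟩
  exact (hs.scale_smul hK hu hu₀ hv hpos).trans (div_self hpos.ne')

theorem mem_nehariU_iff_nehariGauge_lt_one (hs : IsNehariScale K D G s)
    (hK : ∀ c : ℝ, 0 < c → ∀ u ∈ K, c • u ∈ K) (hne : ∃ w ∈ K, w ≠ 0) (hu : u ∈ K) (hv : v ∈ D) :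
    (u, v) ∈ nehariU K D s ↔ nehariGauge s (u, v) < 1 := by
  constructor
  · rintro ⟨c, hc₀, hc₁, ⟨w, v'⟩, hw, heq⟩
    obtain ⟨rfl, rfl⟩ := Prod.mk.inj heq
    rcases hc₀.eq_or_lt with rfl | hc
    · simp [nehariGauge_zero]
    · rwa [hs.nehariGauge_smul hK hw.1 hv hc, (mem_nehariUb_iff_nehariGauge_eq_one hw.1 hv).1 hw,
        mul_one]
  · intro hlt
    rcases eq_or_ne u 0 with rfl | hu₀
    · obtain ⟨w, hw, hw₀⟩ := hne
      exact ⟨0, le_rfl, one_pos, _, hs.smul_mem_nehariUb hK hw hw₀ hv, by simp⟩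
    · rw [nehariGauge_of_ne_zero s hu₀] at hlt
      have hpos := hs.pos hu hu₀ hv
      exact ⟨(s u v)⁻¹, (inv_pos.2 hpos).le, hlt, _, hs.smul_mem_nehariUb hK hu hu₀ hv,
        by simp [smul_smul, hpos.ne']⟩

end IsNehariScale

theorem nehariU_frontier_eq_Ub_general {m M : ℝ} (hK : ∀ c : ℝ, 0 < c → ∀ u ∈ K, c • u ∈ K)
    (hne : ∃ u ∈ K, u ≠ 0)
    (hG : ContinuousOn (fun p : X₁ × X₂ => G p.1 p.2) ((K \ {0}) ×ˢ D))
    (hs : IsNehariScale K D G s) (hm : 0 < m)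
    (hbound : ∀ u ∈ K, ‖u‖ = 1 → ∀ v ∈ D, s u v ∈ Icc m M) :
    frontier {p : ↥(K ×ˢ D) | (p : X₁ × X₂) ∈ nehariU K D s} =
      {p : ↥(K ×ˢ D) | (p : X₁ × X₂) ∈ nehariUb K D s} := by
  have hU : {p : ↥(K ×ˢ D) | (p : X₁ × X₂) ∈ nehariU K D s} =
      {p : ↥(K ×ˢ D) | nehariGauge s p < 1} :=
    Set.ext fun p => hs.mem_nehariU_iff_nehariGauge_lt_one hK hne p.2.1 p.2.2
  have hUb : {p : ↥(K ×ˢ D) | (p : X₁ × X₂) ∈ nehariUb K D s} =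
      {p : ↥(K ×ˢ D) | nehariGauge s p = 1} :=
    Set.ext fun p => mem_nehariUb_iff_nehariGauge_eq_one p.2.1 p.2.2
  rw [hU, hUb]
  exact frontier_setOf_lt_eq_of_homogeneous hK (hs.continuousOn_nehariGauge hK hG hm hbound)
    (fun c hc u hu v hv => hs.nehariGauge_smul hK hu hv hc) one_pos

end Boundary

theorem nehariU_frontier_eq_Ub
    {X₁ X₂ : Type*}
    [NormedAddCommGroup X₁] [NormedSpace ℝ X₁] [CompleteSpace X₁]
    [NormedAddCommGroup X₂] [NormedSpace ℝ X₂] [CompleteSpace X₂]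
    -- K₁ is a non-degenerate cone
    (K₁ : Set X₁) (hK₁closed : IsClosed K₁) (hK₁conv : Convex ℝ K₁)
    (hK₁cone : ∀ lam : ℝ, 0 ≤ lam → ∀ u ∈ K₁, lam • u ∈ K₁)
    (hK₁nondeg : ∃ u ∈ K₁, u ≠ 0)
    -- D is nonempty, bounded, closed, convex
    (D : Set X₂) (hDne : D.Nonempty) (hDbdd : Bornology.IsBounded D)
    (hDclosed : IsClosed D) (hDconv : Convex ℝ D)
    -- the operator T₁ : K₁ × D → K₁ is continuous
    (T₁ : X₁ → X₂ → X₁) (hT₁maps : ∀ u ∈ K₁, ∀ v ∈ D, T₁ u v ∈ K₁)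
    (hT₁cont : ContinuousOn (fun p : X₁ × X₂ => T₁ p.1 p.2) (K₁ ×ˢ D))
    -- the functional 𝓕 : K₁ × K₁ → ℝ, continuous, with 𝓕(λu,u)=0 ↔ λ=1
    (F : X₁ → X₁ → ℝ)
    (hFcont : ContinuousOn (fun p : X₁ × X₁ => F p.1 p.2) (K₁ ×ˢ K₁))
    (hF : ∀ u ∈ K₁, u ≠ 0 → ∀ lam : ℝ, 0 < lam → (F (lam • u) u = 0 ↔ lam = 1))
    -- condition (h1): s(u,v) is the unique positive zero
    (s : X₁ → X₂ → ℝ)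
    (h1 : ∀ u ∈ K₁, u ≠ 0 → ∀ v ∈ D,
      0 < s u v ∧ F (T₁ (s u v • u) v) (s u v • u) = 0 ∧
      ∀ σ : ℝ, 0 < σ → F (T₁ (σ • u) v) (σ • u) = 0 → σ = s u v)
    -- condition (h2): m < s < M on the unit sphere of the cone, times D
    (m M : ℝ) (hm : 0 < m) (hmM : m < M)
    (h2 : ∀ u ∈ K₁, ‖u‖ = 1 → ∀ v ∈ D, m < s u v ∧ s u v < M) :
    frontier {p : ↥(K₁ ×ˢ D) | (p : X₁ × X₂) ∈ nehariU K₁ D s} =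
      {p : ↥(K₁ ×ˢ D) | (p : X₁ × X₂) ∈ nehariUb K₁ D s} := by
  have hG : ContinuousOn (fun p : X₁ × X₂ => F (T₁ p.1 p.2) p.1) (K₁ ×ˢ D) :=
    hFcont.comp (hT₁cont.prodMk continuousOn_fst) fun p hp => ⟨hT₁maps _ hp.1 _ hp.2, hp.1⟩
  exact nehariU_frontier_eq_Ub_general (G := fun u v => F (T₁ u v) u)
    (fun c hc => hK₁cone c hc.le) hK₁nondeg (hG.mono (prod_mono_left sdiff_subset)) h1 hm
    fun u hu hnorm v hv => Ioo_subset_Icc_self (h2 u hu hnorm v hv)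
end

section
/- (Nehari–Schauder fixed point theorem.) Assume conditions (h1) and (h2). Then the operator (T₁, T₂) admits a fixed point (u,v) ∈ K₁ × D, i.e. T₁(u,v) = u and T₂(u,v) = v. If, in addition, (T₁, T₂) has no fixed point of the form (0, v̄) with v̄ ∈ D, then the fixed point (u,v) belongs to U_b. -/
/-!
Pull a point `u` lying beyond the Nehari point `s u v • u` of its ray back to that point, and fix
all other points: this is `u ↦ min 1 (s u v) • u`. Uniqueness of the zero makes `s` homogeneous of
degree `-1` in `u` and, together with its bounds on the unit sphere, continuous away from `u = 0`;
near `0` the map is the identity. After composition with it, `(T₁, T₂)` sends a bounded closed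
convex set into a compact part of itself, so Schauder's theorem applies. Truncation creates no
fixed point: if `T₁ u v` were pulled back to `u = c • T₁ u v` with `c < 1`, then
`F (c⁻¹ • u) u = 0`, which forces `c = 1`.

Schauder's theorem follows from Brouwer's theorem on the simplex by projecting onto the span of a
finite net. Brouwer's theorem comes from a lemma of Knaster–Kuratowski–Mazurkiewicz type for closed
covers in which the `i`-th set contains the `i`-th face. The almost common points of such a cover
are found on a fine grid of the simplex by Scarf's parity argument: a coloured finite set, ranked in
one way for each colour, has a subset whose minima in its own colours are not all exceeded by any
point.
-/

open Finset Function Filter Topology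

section DoubleCounting

variable {V I : Type*} [DecidableEq V]

lemma sum_card_filter_insert_eq_sum_card_filter_erase [Fintype V] (P Q : Finset V → Prop)
    [DecidablePred P] [DecidablePred Q] :
    ∑ τ with Q τ, #{x | x ∉ τ ∧ P (insert x τ)} = ∑ σ with P σ, #{x ∈ σ | Q (σ.erase x)} := by
  rw [← card_sigma, ← card_sigma]
  refine card_bij' (fun q _ ↦ ⟨insert q.2 q.1, q.2⟩) (fun q _ ↦ ⟨q.1.erase q.2, q.2⟩) ?_ ?_ ?_ ?_
  · rintro ⟨τ, x⟩ h
    simp only [mem_sigma, mem_filter, mem_univ, true_and] at h ⊢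
    obtain ⟨hQ, hx, hP⟩ := h
    exact ⟨hP, mem_insert_self _ _, by rwa [erase_insert hx]⟩
  · rintro ⟨σ, x⟩ h
    simp only [mem_sigma, mem_filter, mem_univ, true_and] at h ⊢
    obtain ⟨hP, hx, hQ⟩ := h
    exact ⟨hQ, notMem_erase _ _, by rwa [insert_erase hx]⟩
  · rintro ⟨τ, x⟩ h
    simp only [mem_sigma, mem_filter, mem_univ, true_and] at h
    simp only [erase_insert h.2.1]
  · rintro ⟨σ, x⟩ h
    simp only [mem_sigma, mem_filter, mem_univ, true_and] at h
    simp only [insert_erase h.2.1]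

variable [DecidableEq I]

lemma image_erase_eq_image_iff {c : V → I} {σ : Finset V} {x : V} (hx : x ∈ σ) :
    (σ.erase x).image c = σ.image c ↔ ∃ z ∈ σ.erase x, c z = c x := by
  rw [← mem_image]
  constructor
  · intro h
    rw [h]
    exact mem_image_of_mem c hx
  · intro h
    conv_rhs => rw [← insert_erase hx, image_insert, insert_eq_of_mem h]

lemma card_filter_image_erase_eq_image {c : V → I} {σ : Finset V} (hσ : #(σ.image c) + 1 = #σ) :
    #{x ∈ σ | (σ.erase x).image c = σ.image c} = 2 := by
  obtain ⟨x, hx, y, hy, hxy, hcxy⟩ := exists_ne_map_eq_of_card_lt_of_maps_to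
    (s := σ) (t := σ.image c) (by omega) fun _ ↦ mem_image_of_mem c
  have hinj : Set.InjOn c (σ.erase x) := by
    apply injOn_of_card_image_eq
    rw [(image_erase_eq_image_iff hx).2 ⟨y, mem_erase.2 ⟨hxy.symm, hy⟩, hcxy.symm⟩,
      card_erase_of_mem hx]
    omega
  rw [card_eq_two]
  refine ⟨x, y, hxy, ext fun z ↦ ?_⟩
  simp only [mem_filter, mem_insert, mem_singleton]
  constructor
  · rintro ⟨hz, hzc⟩
    obtain ⟨w, hw, hcw⟩ := (image_erase_eq_image_iff hz).1 hzc
    obtain ⟨hwz, hwσ⟩ := mem_erase.1 hw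
    by_contra! hne
    have hz' : z ∈ σ.erase x := mem_erase.2 ⟨hne.1, hz⟩
    rcases eq_or_ne w x with rfl | hwx
    · exact hne.2 (hinj hz' (mem_erase.2 ⟨hxy.symm, hy⟩) (hcw.symm.trans hcxy))
    · exact hwz (hinj (mem_erase.2 ⟨hwx, hwσ⟩) hz' hcw)
  · rintro (rfl | rfl)
    · exact ⟨hx, (image_erase_eq_image_iff hx).2 ⟨y, mem_erase.2 ⟨hxy.symm, hy⟩, hcxy.symm⟩⟩
    · exact ⟨hy, (image_erase_eq_image_iff hy).2 ⟨x, mem_erase.2 ⟨hxy, hx⟩, hcxy⟩⟩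

lemma even_card_filter_image_erase_eq_erase_univ [Fintype I] {c : V → I} {σ : Finset V}
    (hcard : #σ = Fintype.card I) (hne : σ.image c ≠ univ) (i₀ : I) :
    Even #{x ∈ σ | (σ.erase x).image c = univ.erase i₀} := by
  by_cases himg : σ.image c = univ.erase i₀
  · rw [← himg, card_filter_image_erase_eq_image]
    · exact even_two
    · rw [himg, card_erase_add_one (mem_univ i₀), card_univ, hcard]
  · rw [filter_eq_empty_iff.2]
    · exact Even.zero
    · intro x hx hxc
      have hσ : σ.image c = insert (c x) (univ.erase i₀) := by
        rw [← hxc, ← image_insert, insert_erase hx]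
      rcases eq_or_ne (c x) i₀ with hcx | hcx
      · exact hne (by rw [hσ, hcx, insert_erase (mem_univ _)])
      · exact himg (by rw [hσ, insert_eq_of_mem (mem_erase.2 ⟨hcx, mem_univ _⟩)])

end DoubleCounting

section Scarf

variable {V I α : Type*} [LinearOrder α]

/-- Scarf's notion of a dominating set for the rankings `r i`: no `y` exceeds, in every ranking,
the minimum of that ranking over `σ`. -/
def IsScarfDominating (r : I → V → α) (σ : Finset V) : Prop :=
  ∀ y, ∃ i, ∀ x ∈ σ, r i y ≤ r i x

/-- `a k` is a minimizer of the ranking `r k` on `τ`, for every `k`. -/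
def IsMinSelection (r : I → V → α) (τ : Finset V) (a : I → V) : Prop :=
  ∀ k, a k ∈ τ ∧ ∀ x ∈ τ, r k (a k) ≤ r k x

/-- The points exceeding `a k` in every ranking `r k` except possibly the one with `k = p`. The
maximum of `r p` on this set is what can be added to a dominating set with minimizers `a`. -/
def strictlyAbove (r : I → V → α) (a : I → V) (p : I) : Set V :=
  {y | ∀ k ≠ p, r k (a k) < r k y}

variable {r : I → V → α} {σ τ : Finset V} {a : I → V} {p : I} {x y z : V}

lemma IsScarfDominating.mono (hσ : IsScarfDominating r σ) (hτσ : τ ⊆ σ) :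
    IsScarfDominating r τ := fun y ↦
  let ⟨i, hi⟩ := hσ y
  ⟨i, fun x hx ↦ hi x (hτσ hx)⟩

lemma exists_isMinSelection (r : I → V → α) (hτ : τ.Nonempty) : ∃ a, IsMinSelection r τ a := by
  choose a ha using fun k ↦ exists_min_image τ (r k) hτ
  exact ⟨a, ha⟩

lemma IsScarfDominating.le_of_mem_strictlyAbove (hσ : IsScarfDominating r σ) (hτσ : τ ⊆ σ)
    (ha : IsMinSelection r τ a) (hy : y ∈ strictlyAbove r a p) (hz : z ∈ σ) : r p y ≤ r p z := by
  obtain ⟨k, hk⟩ := hσ y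
  obtain rfl : k = p := by
    by_contra hkp
    exact (hy k hkp).not_ge (hk _ (hτσ (ha k).1))
  exact hk z hz

namespace IsMinSelection

lemma exists_eq (ha : IsMinSelection r τ a) (hr : ∀ i, Injective (r i))
    (hτ : IsScarfDominating r τ) (hx : x ∈ τ) : ∃ k, a k = x := by
  obtain ⟨k, hk⟩ := hτ x
  exact ⟨k, hr k (((ha k).2 x hx).antisymm (hk _ (ha k).1))⟩

lemma injective_of_card_eq [Fintype I] (ha : IsMinSelection r σ a) (hr : ∀ i, Injective (r i))
    (hσ : IsScarfDominating r σ) (hcard : #σ = Fintype.card I) : Injective a := by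
  classical
  have himage : univ.image a = σ := by
    ext x
    simp only [mem_image, mem_univ, true_and]
    exact ⟨by rintro ⟨k, rfl⟩; exact (ha k).1, ha.exists_eq hr hσ⟩
  rw [← Set.injOn_univ, ← coe_univ]
  exact injOn_of_card_image_eq (by rw [himage, hcard, card_univ])

lemma notMem_of_mem_strictlyAbove (ha : IsMinSelection r τ a) (hr : ∀ i, Injective (r i))
    (hτ : IsScarfDominating r τ) {q : I} (hpq : p ≠ q) (hapq : a p = a q)
    (hx : x ∈ strictlyAbove r a p) : x ∉ τ := by
  intro hxτ
  obtain ⟨k, rfl⟩ := ha.exists_eq hr hτ hxτ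
  rcases eq_or_ne k p with rfl | hkp
  · exact (hx q hpq.symm).ne (by rw [hapq])
  · exact lt_irrefl _ (hx k hkp)

lemma disjoint_strictlyAbove (ha : IsMinSelection r τ a) (hτ : IsScarfDominating r τ) {q : I}
    (hpq : p ≠ q) : Disjoint (strictlyAbove r a p) (strictlyAbove r a q) :=
  Set.disjoint_left.2 fun _ hp hq ↦
    (hq p hpq).not_ge (hτ.le_of_mem_strictlyAbove subset_rfl ha hp (ha p).1)

variable [DecidableEq V]

lemma isScarfDominating_insert (ha : IsMinSelection r τ a) (hτ : IsScarfDominating r τ)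
    (hx : x ∈ strictlyAbove r a p) (hmax : ∀ y ∈ strictlyAbove r a p, r p y ≤ r p x) :
    IsScarfDominating r (insert x τ) := by
  intro y
  by_cases hy : y ∈ strictlyAbove r a p
  · exact ⟨p, forall_mem_insert .. |>.2
      ⟨hmax y hy, fun z ↦ hτ.le_of_mem_strictlyAbove subset_rfl ha hy⟩⟩
  · simp only [strictlyAbove, Set.mem_ofPred_eq, not_forall, not_lt] at hy
    obtain ⟨k, hkp, hk⟩ := hy
    exact ⟨k, forall_mem_insert .. |>.2
      ⟨hk.trans (hx k hkp).le, fun z hz ↦ hk.trans ((ha k).2 z hz)⟩⟩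

lemma exists_mem_strictlyAbove_of_insert [Fintype I] (ha : IsMinSelection r τ a)
    (hr : ∀ i, Injective (r i)) (hcard : #τ + 1 = Fintype.card I) (hx : x ∉ τ)
    (hD : IsScarfDominating r (insert x τ)) :
    ∃ p, x ∈ strictlyAbove r a p ∧ Set.InjOn a {p}ᶜ := by
  obtain ⟨b, hb⟩ := exists_isMinSelection r (insert_nonempty x τ)
  have hbinj := hb.injective_of_card_eq hr hD (by rw [card_insert_of_notMem hx, hcard])
  obtain ⟨p, hp⟩ := hb.exists_eq hr hD (mem_insert_self x τ)
  have hne : ∀ k ≠ p, b k ≠ x := fun k hk h ↦ hk (hbinj (h.trans hp.symm))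
  have hba : ∀ k ≠ p, b k = a k := fun k hk ↦ hr k <|
    ((hb k).2 _ (mem_insert_of_mem (ha k).1)).antisymm
      ((ha k).2 _ (mem_of_mem_insert_of_ne (hb k).1 (hne k hk)))
  refine ⟨p, fun k hk ↦ ?_, fun k hk l hl hkl ↦ hbinj (by rw [hba k hk, hba l hl, hkl])⟩
  rw [← hba k hk]
  exact ((hb k).2 x (mem_insert_self x τ)).lt_of_ne fun h ↦ hne k hk (hr k h)

end IsMinSelection

lemma card_filter_isMax [Fintype V] {f : V → α} (hf : Injective f) (U : Set V)
    [DecidablePred fun x ↦ x ∈ U ∧ ∀ y ∈ U, f y ≤ f x] [Decidable U.Nonempty] :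
    #{x | x ∈ U ∧ ∀ y ∈ U, f y ≤ f x} = if U.Nonempty then 1 else 0 := by
  split_ifs with hU
  · obtain ⟨x, hx, hmax⟩ := Set.exists_max_image U f U.toFinite hU
    refine card_eq_one.2 ⟨x, ext fun z ↦ ?_⟩
    simp only [mem_filter, mem_univ, true_and, mem_singleton]
    constructor
    · rintro ⟨hz, hzmax⟩
      exact hf ((hmax z hz).antisymm (hzmax x hx))
    · rintro rfl
      exact ⟨hx, hmax⟩
  · rw [card_eq_zero, filter_eq_empty_iff]
    exact fun x _ hx ↦ hU ⟨x, hx.1⟩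

lemma IsMinSelection.card_filter_isScarfDominating_insert [Fintype V] [DecidableEq V] [Fintype I]
    [DecidablePred (IsScarfDominating r)] [∀ p, Decidable (strictlyAbove r a p).Nonempty]
    (ha : IsMinSelection r τ a) (hr : ∀ i, Injective (r i)) (hτ : IsScarfDominating r τ)
    (hcard : #τ + 1 = Fintype.card I) {i j : I} (hij : i ≠ j) (haij : a i = a j) :
    #{x | x ∉ τ ∧ IsScarfDominating r (insert x τ)} =
      (if (strictlyAbove r a i).Nonempty then 1 else 0) +
        if (strictlyAbove r a j).Nonempty then 1 else 0 := by
  classical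
  rw [← card_filter_isMax (hr i), ← card_filter_isMax (hr j), ← card_union_of_disjoint]
  · congr 1
    ext x
    simp only [mem_filter, mem_univ, true_and, mem_union]
    constructor
    · rintro ⟨hx, hD⟩
      have hmax : ∀ p, ∀ y ∈ strictlyAbove r a p, r p y ≤ r p x := fun p y hy ↦
        hD.le_of_mem_strictlyAbove (subset_insert x τ) ha hy (mem_insert_self x τ)
      obtain ⟨p, hp, hinj⟩ := ha.exists_mem_strictlyAbove_of_insert hr hcard hx hD
      rcases eq_or_ne i p with rfl | hip
      · exact .inl ⟨hp, hmax i⟩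
      · rcases eq_or_ne j p with rfl | hjp
        · exact .inr ⟨hp, hmax j⟩
        · exact absurd (hinj hip hjp haij) hij
    · rintro (⟨hx, hmax⟩ | ⟨hx, hmax⟩)
      · exact ⟨ha.notMem_of_mem_strictlyAbove hr hτ hij haij hx,
          ha.isScarfDominating_insert hτ hx hmax⟩
      · exact ⟨ha.notMem_of_mem_strictlyAbove hr hτ hij.symm haij.symm hx,
          ha.isScarfDominating_insert hτ hx hmax⟩
  · simp only [disjoint_left, mem_filter, mem_univ, true_and]
    exact fun x hi hj ↦ Set.disjoint_left.1 (ha.disjoint_strictlyAbove hτ hij) hi.1 hj.1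

/-- Scarf's slack points: `s i` is the minimum of the ranking `r i`, and lies above all points
that are not slack in the other rankings. They play the role of the vertices of a simplex. -/
structure IsSlackFamily (r : I → V → α) (s : I → V) : Prop where
  le : ∀ i x, r i (s i) ≤ r i x
  lt : ∀ i j, i ≠ j → ∀ x ∉ Set.range s, r i x < r i (s j)

namespace IsSlackFamily

variable {s : I → V} {i₀ : I}

lemma lt_of_ne (hs : IsSlackFamily r s) (hr : ∀ i, Injective (r i)) {i : I} (hx : x ≠ s i) :
    r i (s i) < r i x :=
  (hs.le i x).lt_of_ne fun h ↦ hx (hr i h.symm)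

lemma exists_forall_mem_of_not_nonempty (hs : IsSlackFamily r s) (hr : ∀ i, Injective (r i))
    (hsinj : Injective s) (ha : IsMinSelection r τ a) (hp : ¬(strictlyAbove r a p).Nonempty) :
    ∃ k, ∀ z ∈ τ, ∃ l ≠ k, s l = z := by
  have hsp : s p ∉ strictlyAbove r a p := fun h ↦ hp ⟨_, h⟩
  simp only [strictlyAbove, Set.mem_ofPred_eq, not_forall, not_lt] at hsp
  obtain ⟨k, hkp, hk⟩ := hsp
  refine ⟨k, fun z hz ↦ ?_⟩
  have hle : r k (s p) ≤ r k z := hk.trans ((ha k).2 z hz)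
  obtain ⟨l, rfl⟩ : z ∈ Set.range s := by
    by_contra hzs
    exact (hs.lt k p hkp z hzs).not_ge hle
  refine ⟨l, ?_, rfl⟩
  rintro rfl
  exact (hs.lt_of_ne hr (hsinj.ne hkp.symm)).not_ge hle

variable [Fintype I] [DecidableEq I] [DecidableEq V]

lemma isScarfDominating_image_erase (hs : IsSlackFamily r s) (i₀ : I) :
    IsScarfDominating r ((univ.erase i₀).image s) := by
  intro y
  by_cases hy : y ∈ Set.range s
  · obtain ⟨l, rfl⟩ := hy
    exact ⟨l, fun x _ ↦ hs.le l x⟩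
  · refine ⟨i₀, fun x hx ↦ ?_⟩
    obtain ⟨l, hl, rfl⟩ := mem_image.1 hx
    exact (hs.lt i₀ l (ne_of_mem_erase hl).symm y hy).le

lemma card_filter_isScarfDominating_insert_image_erase [Fintype V]
    [DecidablePred (IsScarfDominating r)] [Nontrivial I]
    (hs : IsSlackFamily r s) (hr : ∀ i, Injective (r i)) (hsinj : Injective s)
    (hy : y ∉ Set.range s) (i₀ : I) :
    #{x | x ∉ (univ.erase i₀).image s ∧
      IsScarfDominating r (insert x ((univ.erase i₀).image s))} = 1 := by
  classical
  have hcard : #((univ.erase i₀).image s) + 1 = Fintype.card I := by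
    rw [card_image_of_injective _ hsinj, card_erase_add_one (mem_univ _), card_univ]
  obtain ⟨a, ha⟩ := exists_isMinSelection r (τ := (univ.erase i₀).image s)
    (card_pos.1 (by have := Fintype.one_lt_card (α := I); omega))
  have has : ∀ l ≠ i₀, a l = s l := fun l hl ↦ hr l <|
    ((ha l).2 _ (mem_image_of_mem s (mem_erase.2 ⟨hl, mem_univ l⟩))).antisymm (hs.le l _)
  obtain ⟨q, hq, hsq⟩ := mem_image.1 (ha i₀).1
  have hqi : q ≠ i₀ := ne_of_mem_erase hq
  have hnonempty : (strictlyAbove r a i₀).Nonempty := by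
    refine ⟨y, fun k hk ↦ ?_⟩
    rw [has k hk]
    exact hs.lt_of_ne hr fun h ↦ hy ⟨k, h.symm⟩
  have hempty : ¬(strictlyAbove r a q).Nonempty := by
    rintro ⟨z, hz⟩
    have hlt : r i₀ (s q) < r i₀ z := hsq ▸ hz i₀ hqi.symm
    obtain ⟨l, rfl⟩ : z ∈ Set.range s := by
      by_contra hzs
      exact hlt.not_gt (hs.lt i₀ q hqi.symm z hzs)
    have hlq : l ≠ q := by rintro rfl; exact lt_irrefl _ hlt
    have hli : l ≠ i₀ := by rintro rfl; exact hlt.not_ge (hs.le _ _)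
    exact lt_irrefl _ (has l hli ▸ hz l hlq)
  rw [ha.card_filter_isScarfDominating_insert hr (hs.isScarfDominating_image_erase i₀) hcard
    hqi.symm ((has q hqi).trans hsq).symm, if_pos hnonempty, if_neg hempty]

lemma card_filter_isScarfDominating_insert_of_ne [Fintype V]
    [DecidablePred (IsScarfDominating r)] [Nontrivial I]
    (hs : IsSlackFamily r s) (hr : ∀ i, Injective (r i)) (hsinj : Injective s)
    (hτ : IsScarfDominating r τ) (hcard : #τ + 1 = Fintype.card I)
    (hne : ∀ k, τ ≠ (univ.erase k).image s) :
    #{x | x ∉ τ ∧ IsScarfDominating r (insert x τ)} = 2 := by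
  classical
  obtain ⟨a, ha⟩ := exists_isMinSelection r (τ := τ)
    (card_pos.1 (by have := Fintype.one_lt_card (α := I); omega))
  obtain ⟨i, -, j, -, hij, haij⟩ := exists_ne_map_eq_of_card_lt_of_maps_to
    (s := (univ : Finset I)) (t := τ) (f := a) (by rw [card_univ]; omega) fun k _ ↦ (ha k).1
  have hnonempty : ∀ p, (strictlyAbove r a p).Nonempty := by
    by_contra! ⟨p, hp⟩
    obtain ⟨k, hk⟩ := hs.exists_forall_mem_of_not_nonempty hr hsinj ha
      (Set.not_nonempty_iff_eq_empty.2 hp)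
    refine hne k (eq_of_subset_of_card_le (fun z hz ↦ ?_) ?_)
    · obtain ⟨l, hl, rfl⟩ := hk z hz
      exact mem_image_of_mem s (mem_erase.2 ⟨hl, mem_univ l⟩)
    · rw [card_image_of_injective _ hsinj, card_erase_of_mem (mem_univ _), card_univ]
      omega
  rw [ha.card_filter_isScarfDominating_insert hr hτ hcard hij haij, if_pos (hnonempty i),
    if_pos (hnonempty j)]

end IsSlackFamily

theorem IsSlackFamily.exists_isScarfDominating_forall_color [Finite V] [Finite I] [Nontrivial I]
    {s : I → V} (hs : IsSlackFamily r s) (hr : ∀ i, Injective (r i)) (hy : y ∉ Set.range s)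
    {c : V → I} (hc : LeftInverse c s) :
    ∃ σ, IsScarfDominating r σ ∧ ∀ i, ∃ x ∈ σ, c x = i := by
  classical
  cases nonempty_fintype V
  cases nonempty_fintype I
  obtain ⟨i₀⟩ : Nonempty I := inferInstance
  -- If the conclusion fails, the number of incidences between rooms and their doors is even, yet
  -- every door belongs to two rooms, except the one formed by the `s i`, `i ≠ i₀`, which belongs to
  -- one.
  by_contra! hcolor
  let Room (σ : Finset V) : Prop := #σ = Fintype.card I ∧ IsScarfDominating r σ
  let Door (τ : Finset V) : Prop :=
    #τ + 1 = Fintype.card I ∧ IsScarfDominating r τ ∧ τ.image c = univ.erase i₀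
  have hrooms (σ) (hσ : Room σ) : Even #{x ∈ σ | Door (σ.erase x)} := by
    have hne : σ.image c ≠ univ := fun h ↦ by
      obtain ⟨i, hi⟩ := hcolor σ hσ.2
      obtain ⟨x, hx, hxi⟩ := mem_image.1 (h ▸ mem_univ i)
      exact hi x hx hxi
    convert even_card_filter_image_erase_eq_erase_univ hσ.1 hne i₀ using 2
    refine filter_congr fun x hx ↦ ⟨fun h ↦ h.2.2, fun h ↦ ?_⟩
    exact ⟨by rw [card_erase_add_one hx, hσ.1], hσ.2.mono (erase_subset x σ), h⟩
  have hdoors (τ) (hτ : Door τ) :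
      #{x | x ∉ τ ∧ Room (insert x τ)} = #{x | x ∉ τ ∧ IsScarfDominating r (insert x τ)} := by
    refine congrArg card (filter_congr fun x _ ↦ and_congr_right fun hx ↦ and_iff_right ?_)
    rw [card_insert_of_notMem hx, hτ.1]
  have himage (k) : ((univ.erase k).image s).image c = univ.erase k := by
    rw [image_image, hc.comp_eq_id, image_id]
  have hdoor₀ : Door ((univ.erase i₀).image s) :=
    ⟨by rw [card_image_of_injective _ hc.injective, card_erase_add_one (mem_univ _), card_univ],
      hs.isScarfDominating_image_erase i₀, himage i₀⟩
  have heven := sum_card_filter_insert_eq_sum_card_filter_erase Room Door ▸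
    even_sum _ fun σ hσ ↦ hrooms σ (mem_filter.1 hσ).2
  rw [← add_sum_erase _ _ (mem_filter.2 ⟨mem_univ _, hdoor₀⟩), hdoors _ hdoor₀,
    hs.card_filter_isScarfDominating_insert_image_erase hr hc.injective hy, Nat.even_add] at heven
  refine absurd (heven.2 (even_sum _ fun τ hτ ↦ ?_)) Nat.not_even_one
  obtain ⟨hne, hτ⟩ := mem_erase.1 hτ
  replace hτ : Door τ := (mem_filter.1 hτ).2
  rw [hdoors τ hτ, hs.card_filter_isScarfDominating_insert_of_ne hr hc.injective hτ.2.1 hτ.1]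
  · exact even_two
  · rintro k rfl
    have : univ.erase k = univ.erase i₀ := (himage k).symm.trans hτ.2.2
    exact hne (by rw [this])

end Scarf

section SlackRanking

variable {V I α : Type*}

/-- The rankings `r` extended to `I ⊕ V`, with slack points `Sum.inl i` below everything for `i` and
above `V` for the other rankings. -/
def slackRanking [DecidableEq I] (r : I → V → α) (i : I) : I ⊕ V → WithBot (α ⊕ₗ I)
  | .inl j => if j = i then ⊥ else ↑(Sum.inrₗ j : α ⊕ₗ I)
  | .inr x => ↑(Sum.inlₗ (r i x) : α ⊕ₗ I)

lemma slackRanking_injective [DecidableEq I] {r : I → V → α} (hr : ∀ i, Injective (r i)) (i : I) :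
    Injective (slackRanking r i) := by
  rintro (j | x) (k | y) h
  · by_cases hj : j = i <;> by_cases hk : k = i <;> simp_all [slackRanking]
  · by_cases hj : j = i <;> simp_all [slackRanking]
  · by_cases hk : k = i <;> simp_all [slackRanking]
  · simpa [slackRanking, (hr i).eq_iff] using h

lemma isSlackFamily_slackRanking [LinearOrder I] [LinearOrder α] (r : I → V → α) :
    IsSlackFamily (slackRanking r) Sum.inl where
  le i x := by simp [slackRanking]
  lt i j hij := by
    rintro (k | x) hx
    · exact absurd ⟨k, rfl⟩ hx
    · simp [slackRanking, hij.symm]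

theorem exists_finset_forall_exists_color_forall_le [LinearOrder α] [Finite V] [Nonempty V]
    [Finite I] (w : I → V → α) (c : V → I) :
    ∃ σ : Finset V, ∀ y, ∃ z ∈ σ, ∀ x ∈ σ, w (c z) y ≤ w (c z) x := by
  obtain ⟨v⟩ := ‹Nonempty V›
  rcases subsingleton_or_nontrivial I with hI | hI
  · obtain ⟨z, hz⟩ := Finite.exists_max (w (c v))
    refine ⟨{z}, fun y ↦ ⟨z, mem_singleton_self z, fun x hx ↦ ?_⟩⟩
    rw [mem_singleton.1 hx, Subsingleton.elim (c z) (c v)]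
    exact hz y
  classical
  let := linearOrderOfSTO (WellOrderingRel (α := I))
  let := linearOrderOfSTO (WellOrderingRel (α := V))
  -- Ties are broken by an arbitrary linear order on `V`.
  let r (i : I) (x : V) : α ×ₗ V := toLex (w i x, x)
  have hr (i : I) : Injective (r i) := fun x y h ↦ congrArg (fun q ↦ (ofLex q).2) h
  obtain ⟨σ, hσ, hcolor⟩ := (isSlackFamily_slackRanking r).exists_isScarfDominating_forall_color
    (slackRanking_injective hr) (y := .inr v) (c := Sum.elim id c) (by simp) fun _ ↦ rfl
  refine ⟨σ.toRight, fun y ↦ ?_⟩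
  obtain ⟨i, hi⟩ := hσ (.inr y)
  obtain ⟨j | z, hz, rfl⟩ := hcolor i
  · simpa [slackRanking] using hi _ hz
  · refine ⟨z, mem_toRight.2 hz, fun x hx ↦ ?_⟩
    have hle : r (c z) y ≤ r (c z) x := by simpa [slackRanking] using hi _ (mem_toRight.1 hx)
    exact Prod.Lex.monotone_fst _ _ hle

end SlackRanking

section Brouwer

variable {I : Type*} [Fintype I]

lemma exists_le_mem_piAntidiag_univ [DecidableEq I] [Nonempty I] {N : ℕ} {f : I → ℕ}
    (hf : ∑ i, f i ≤ N) : ∃ y ∈ piAntidiag univ N, f ≤ y := by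
  obtain ⟨i₀⟩ := ‹Nonempty I›
  refine ⟨f + Pi.single i₀ (N - ∑ i, f i), ?_, le_self_add⟩
  simp [sum_add_distrib, Nat.add_sub_cancel' hf]

lemma lt_add_of_sum_lt_sum_add {x l : I → ℕ} (hlx : l ≤ x) {k : ℕ}
    (hsum : ∑ i, x i < ∑ i, l i + k) (i : I) : x i < l i + k := by
  classical
  rw [← add_sum_erase _ _ (mem_univ i), ← add_sum_erase _ l (mem_univ i)] at hsum
  have : ∑ j ∈ univ.erase i, l j ≤ ∑ j ∈ univ.erase i, x j := sum_le_sum fun j _ ↦ hlx j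
  omega

lemma exists_finset_piAntidiag_subset_box [DecidableEq I] [Nonempty I] (N : ℕ)
    (c : piAntidiag (univ : Finset I) N → I) :
    ∃ σ : Finset (piAntidiag (univ : Finset I) N), σ.Nonempty ∧ ∃ l : I → ℕ,
      (∀ x ∈ σ, ∀ i, l i ≤ x.1 i ∧ x.1 i < l i + Fintype.card I) ∧
      ∀ i, (∃ x ∈ σ, c x = i) ∨ l i = 0 := by
  obtain ⟨y₀, hy₀, -⟩ := exists_le_mem_piAntidiag_univ (N := N) (f := (0 : I → ℕ)) (by simp)
  have : Nonempty (piAntidiag (univ : Finset I) N) := ⟨⟨y₀, hy₀⟩⟩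
  obtain ⟨σ, hσ⟩ := exists_finset_forall_exists_color_forall_le (fun i x ↦ x.1 i) c
  obtain ⟨z₀, hz₀, -⟩ := hσ ⟨y₀, hy₀⟩
  choose a ha hmin using fun i ↦ exists_min_image σ (fun x ↦ x.1 i) ⟨z₀, hz₀⟩
  let l (i : I) : ℕ := if i ∈ σ.image c then (a i).1 i else 0
  -- Otherwise some grid point would exceed the minima over `σ` in all coordinates of `σ.image c`.
  have hN : N < ∑ i, l i + Fintype.card I := by
    by_contra! hle
    have hsum : ∑ i, (l i + 1) ≤ N := by simpa [sum_add_distrib] using hle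
    obtain ⟨y, hy, hly⟩ := exists_le_mem_piAntidiag_univ hsum
    obtain ⟨z, hz, hzy⟩ := hσ ⟨y, hy⟩
    have hlt : l (c z) < y (c z) := hly (c z)
    exact hlt.not_ge (by simpa only [l, if_pos (mem_image_of_mem c hz)] using hzy _ (ha (c z)))
  have hl (x) (hx : x ∈ σ) : l ≤ x.1 := fun i ↦ by
    simp only [l]
    split_ifs
    exacts [hmin i x hx, Nat.zero_le _]
  refine ⟨σ, ⟨z₀, hz₀⟩, l, fun x hx i ↦ ⟨hl x hx i, ?_⟩, fun i ↦ ?_⟩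
  · refine lt_add_of_sum_lt_sum_add (hl x hx) ?_ i
    rwa [(mem_piAntidiag.1 x.2).1]
  · by_cases hi : i ∈ σ.image c
    · exact .inl (mem_image.1 hi)
    · exact .inr (if_neg hi)

lemma exists_forall_dist_lt_or_apply_lt {A : I → Set (stdSimplex ℝ I)} [Nonempty I]
    (hA : ∀ p, ∃ i, p ∈ A i) {ε : ℝ} (hε : 0 < ε) :
    ∃ p : stdSimplex ℝ I, ∀ i, (∃ z ∈ A i, dist z p < ε) ∨ p i < ε := by
  classical
  choose c hc using hA
  obtain ⟨N, hN⟩ := exists_nat_gt (Fintype.card I / ε)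
  have hN₀ : (0 : ℝ) < N := (by positivity : 0 ≤ Fintype.card I / ε).trans_lt hN
  have hcard : Fintype.card I / N < ε := (div_lt_comm₀ hN₀ hε).2 hN
  let q (x : piAntidiag (univ : Finset I) N) : stdSimplex ℝ I := ⟨fun i ↦ x.1 i / N,
    fun i ↦ by positivity, by
      rw [← sum_div, ← Nat.cast_sum, (mem_piAntidiag.1 x.2).1, div_self hN₀.ne']⟩
  obtain ⟨σ, ⟨x₀, hx₀⟩, l, hl, hcolor⟩ := exists_finset_piAntidiag_subset_box N (c ∘ q)
  refine ⟨q x₀, fun i ↦ (hcolor i).imp ?_ fun hli ↦ ?_⟩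
  · rintro ⟨x, hx, rfl⟩
    refine ⟨q x, hc (q x), (dist_pi_lt_iff hε).2 fun j ↦ ?_⟩
    have hdist : |(x.1 j : ℝ) - x₀.1 j| < Fintype.card I := by
      have := hl x hx j
      have := hl x₀ hx₀ j
      rw [abs_sub_lt_iff, sub_lt_iff_lt_add, sub_lt_iff_lt_add]
      constructor <;> norm_cast <;> omega
    calc dist ((x.1 j : ℝ) / N) (x₀.1 j / N) = |(x.1 j : ℝ) - x₀.1 j| / N := by
          rw [Real.dist_eq, ← sub_div, abs_div, abs_of_pos hN₀]
      _ < Fintype.card I / N := by gcongr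
      _ < ε := hcard
  · have : (x₀.1 i : ℝ) < Fintype.card I := by
      have := (hl x₀ hx₀ i).2
      rw [hli, zero_add] at this
      exact_mod_cast this
    exact (div_lt_div_of_pos_right this hN₀).trans hcard

theorem iInter_nonempty_of_isClosed_stdSimplex {A : I → Set (stdSimplex ℝ I)} [Nonempty I]
    (hclosed : ∀ i, IsClosed (A i)) (hcover : ∀ p, ∃ i, p ∈ A i)
    (hface : ∀ i p, p i = 0 → p ∈ A i) : (⋂ i, A i).Nonempty := by
  choose p hp using fun n : ℕ ↦
    exists_forall_dist_lt_or_apply_lt hcover (Nat.one_div_pos_of_nat (α := ℝ) (n := n))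
  let U : Ultrafilter ℕ := hyperfilter ℕ
  have hε : Tendsto (fun n : ℕ ↦ 1 / ((n : ℝ) + 1)) U (𝓝 0) :=
    tendsto_one_div_add_atTop_nhds_zero_nat.mono_left Nat.hyperfilter_le_atTop
  obtain ⟨q, hq⟩ : ∃ q, Tendsto p U (𝓝 q) := ⟨_, (U.map p).le_nhds_lim⟩
  refine ⟨q, Set.mem_iInter.2 fun i ↦ ?_⟩
  rcases Ultrafilter.eventually_or.1 (Eventually.of_forall fun n ↦ hp n i) with hnear | hsmall
  · rw [← (hclosed i).closure_eq, Metric.mem_closure_iff]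
    intro δ hδ
    obtain ⟨n, ⟨z, hz, hzp⟩, hpq, hn⟩ := (hnear.and ((hq.eventually
      (Metric.ball_mem_nhds q (half_pos hδ))).and (hε.eventually_lt_const (half_pos hδ)))).exists
    refine ⟨z, hz, ?_⟩
    linarith [dist_triangle q (p n) z, dist_comm q (p n), dist_comm z (p n), Metric.mem_ball.1 hpq]
  · have hqi : Tendsto (fun n ↦ p n i) U (𝓝 (q i)) :=
      ((continuous_apply i).comp continuous_subtype_val).tendsto q |>.comp hq
    exact hface i q <|
      (le_of_tendsto_of_tendsto hqi hε (hsmall.mono fun _ ↦ le_of_lt)).antisymm (q.2.1 i)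

theorem exists_fixedPoint_of_continuous_stdSimplex [Nonempty I]
    {f : stdSimplex ℝ I → stdSimplex ℝ I} (hf : Continuous f) : ∃ p, f p = p := by
  have hcoord (i : I) : Continuous fun p : stdSimplex ℝ I ↦ p i :=
    (continuous_apply i).comp continuous_subtype_val
  have hsum (p : stdSimplex ℝ I) : ∑ i, p i = ∑ i, f p i := by
    rw [stdSimplex.sum_eq_one, stdSimplex.sum_eq_one]
  obtain ⟨p, hp⟩ := iInter_nonempty_of_isClosed_stdSimplex (A := fun i ↦ {p | p i ≤ f p i})
    (fun i ↦ isClosed_le (hcoord i) ((hcoord i).comp hf))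
    (fun p ↦ by simpa using exists_le_of_sum_le univ_nonempty (hsum p).le)
    fun i p hpi ↦ by simp [hpi]
  have hle (i : I) : p i ≤ f p i := Set.mem_iInter.1 hp i
  have heq := (sum_eq_sum_iff_of_le fun i _ ↦ hle i).1 (hsum p)
  exact ⟨p, stdSimplex.ext (funext fun i ↦ (heq i (mem_univ i)).symm)⟩

end Brouwer

section Schauder

variable {E : Type*} [NormedAddCommGroup E] [NormedSpace ℝ E] {C Q : Set E}

lemma exists_stdSimplex_dist_sum_smul_lt_of_isCompact (hQ : IsCompact Q) {ε : ℝ} (hε : 0 < ε) :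
    ∃ t : Finset E, ↑t ⊆ Q ∧ ∃ w : Q → stdSimplex ℝ t, Continuous w ∧
      ∀ y : Q, dist (∑ i, w y i • (i : E)) y < ε := by
  obtain ⟨t₀, ht₀Q, ht₀fin, hcover⟩ := hQ.finite_cover_balls hε
  lift t₀ to Finset E using ht₀fin with t
  -- The net points are weighted by a partition of unity subordinate to the `ε`-balls around them.
  obtain ⟨f, hf⟩ := PartitionOfUnity.exists_isSubordinate hQ.isClosed
    (fun i : t ↦ Metric.ball (i : E) ε) (fun _ ↦ Metric.isOpen_ball)
    (by rwa [Set.biUnion_eq_iUnion] at hcover)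
  have hsum (y : Q) : ∑ i, f i y = 1 := by
    rw [← finsum_eq_sum_of_fintype, f.sum_eq_one y.2]
  refine ⟨t, ht₀Q, fun y ↦ ⟨fun i ↦ f i y, fun i ↦ f.nonneg i y, hsum y⟩, ?_, fun y ↦ ?_⟩
  · fun_prop
  · have hmem := f.finsum_smul_mem_convex y.2 (g := fun i _ ↦ (i : E)) (t := Metric.ball (y : E) ε)
      (fun i hi ↦ Metric.mem_ball_comm.1 (hf i (subset_tsupport _ hi))) (convex_ball _ _)
    rwa [finsum_eq_sum_of_fintype] at hmem

lemma exists_mem_dist_lt_of_continuousOn_of_isCompact (hC : Convex ℝ C) (hCne : C.Nonempty)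
    (hQ : IsCompact Q) (hQC : Q ⊆ C) {G : E → E} (hG : ContinuousOn G C) (hGQ : Set.MapsTo G C Q)
    {ε : ℝ} (hε : 0 < ε) : ∃ x ∈ C, dist x (G x) < ε := by
  obtain ⟨t, htQ, w, hw, hdist⟩ := exists_stdSimplex_dist_sum_smul_lt_of_isCompact hQ hε
  let b (p : stdSimplex ℝ t) : E := ∑ i, p i • (i : E)
  have hb : Continuous b := by
    refine continuous_finsetSum _ fun i _ ↦ Continuous.smul ?_ continuous_const
    exact (continuous_apply i).comp continuous_subtype_val
  have hbC (p) : b p ∈ C :=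
    hC.sum_mem (fun i _ ↦ p.2.1 i) p.2.2 fun i _ ↦ hQC (htQ i.2)
  let g (p : stdSimplex ℝ t) : Q := ⟨G (b p), hGQ (hbC p)⟩
  have hg : Continuous g := (hG.comp_continuous hb hbC).subtype_mk _
  have : Nonempty t := by
    obtain ⟨x, hx⟩ := hCne
    by_contra! hempty
    simpa using stdSimplex.sum_eq_one (w ⟨G x, hGQ hx⟩)
  obtain ⟨p, hp⟩ := exists_fixedPoint_of_continuous_stdSimplex (hw.comp hg)
  refine ⟨b p, hbC p, ?_⟩
  have := hdist (g p)
  rwa [show w (g p) = p from hp] at this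

theorem exists_fixedPoint_of_convex_of_isCompact (hC : Convex ℝ C) (hCne : C.Nonempty)
    (hQ : IsCompact Q) (hQC : Q ⊆ C) {G : E → E} (hG : ContinuousOn G C)
    (hGQ : Set.MapsTo G C Q) : ∃ x ∈ C, G x = x := by
  choose x hxC hx using fun n : ℕ ↦ exists_mem_dist_lt_of_continuousOn_of_isCompact hC hCne hQ hQC
    hG hGQ (Nat.one_div_pos_of_nat (α := ℝ) (n := n))
  obtain ⟨y, hy, φ, hφ, hlim⟩ := hQ.tendsto_subseq fun n ↦ hGQ (hxC n)
  have hdist : Tendsto (fun n ↦ dist (G (x (φ n))) (x (φ n))) atTop (𝓝 0) :=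
    squeeze_zero (fun _ ↦ dist_nonneg) (fun n ↦ dist_comm (x _) _ ▸ (hx (φ n)).le)
      (tendsto_one_div_add_atTop_nhds_zero_nat.comp hφ.tendsto_atTop)
  have hxy : Tendsto (fun n ↦ x (φ n)) atTop (𝓝[C] y) :=
    tendsto_nhdsWithin_iff.2 ⟨hlim.congr_dist hdist, .of_forall fun n ↦ hxC _⟩
  exact ⟨y, hQC hy, tendsto_nhds_unique ((hG y (hQC hy)).tendsto.comp hxy) hlim⟩

theorem exists_fixedPoint_comp_of_isCompact_closure_image {Z : Type*} [TopologicalSpace Z]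
    {S : Set Z} (hC : Convex ℝ C) (hCne : C.Nonempty) (hS : IsClosed S) {T : E → Z}
    (hT : ContinuousOn T C) (hTS : Set.MapsTo T C S) (hTC : IsCompact (closure (T '' C)))
    {H : Z → E} (hH : ContinuousOn H S) (hHC : Set.MapsTo H S C) : ∃ x ∈ C, H (T x) = x := by
  have hclosure : closure (T '' C) ⊆ S := closure_minimal hTS.image_subset hS
  exact exists_fixedPoint_of_convex_of_isCompact hC hCne
    (hTC.image_of_continuousOn (hH.mono hclosure)) (hHC.mono_left hclosure).image_subset
    (hH.comp hT hTS) fun x hx ↦ Set.mem_image_of_mem H (subset_closure (Set.mem_image_of_mem T hx))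

end Schauder

section Nehari

variable {X Y : Type*} [NormedAddCommGroup X] [NormedSpace ℝ X] {K : Set X} {D : Set Y}
  {Φ s : X → Y → ℝ} {m M : ℝ} {u : X} {v : Y}

/-- Condition (h1) for a function `Φ` on `K × D`: `s u v` is the only positive zero of `Φ` along the
ray through `u`. The Nehari condition takes `Φ u v = F (T₁ u v) u`. -/
def IsFiberZero (K : Set X) (D : Set Y) (Φ s : X → Y → ℝ) : Prop :=
  ∀ u ∈ K, u ≠ 0 → ∀ v ∈ D,
    0 < s u v ∧ Φ (s u v • u) v = 0 ∧ ∀ σ : ℝ, 0 < σ → Φ (σ • u) v = 0 → σ = s u v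

namespace IsFiberZero

lemma mul_eq_of_smul_mem (hs : IsFiberZero K D Φ s) (hu : u ∈ K) (hu₀ : u ≠ 0) (hv : v ∈ D) {c : ℝ}
    (hc : 0 < c) (hcu : c • u ∈ K) : s (c • u) v * c = s u v := by
  obtain ⟨hpos, hzero, -⟩ := hs (c • u) hcu (smul_ne_zero hc.ne' hu₀) v hv
  exact (hs u hu hu₀ v hv).2.2 _ (mul_pos hpos hc) (by rwa [mul_smul])

lemma mul_norm_mem_Ioo (hs : IsFiberZero K D Φ s) (hcone : ∀ c : ℝ, 0 ≤ c → ∀ u ∈ K, c • u ∈ K)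
    (hsphere : ∀ u ∈ K, ‖u‖ = 1 → ∀ v ∈ D, m < s u v ∧ s u v < M)
    (hu : u ∈ K) (hu₀ : u ≠ 0) (hv : v ∈ D) : s u v * ‖u‖ ∈ Set.Ioo m M := by
  have hnorm : 0 < ‖u‖ := norm_pos_iff.2 hu₀
  have hmem : ‖u‖⁻¹ • u ∈ K := hcone _ (inv_nonneg.2 hnorm.le) u hu
  rw [← hs.mul_eq_of_smul_mem hu hu₀ hv (inv_pos.2 hnorm) hmem, inv_mul_cancel_right₀ hnorm.ne']
  exact hsphere _ hmem (norm_smul_inv_norm (𝕜 := ℝ) hu₀) v hv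

lemma eq_of_tendsto [TopologicalSpace Y] (hs : IsFiberZero K D Φ s)
    (hcone : ∀ c : ℝ, 0 ≤ c → ∀ u ∈ K, c • u ∈ K) (hΦ : ContinuousOn (uncurry Φ) (K ×ˢ D))
    (hu : u ∈ K) (hu₀ : u ≠ 0) (hv : v ∈ D)
    {l : Filter (X × Y)} [l.NeBot] (hl : l ≤ 𝓝[K ×ˢ D] (u, v)) {σ : ℝ} (hσ : 0 < σ)
    (hlim : Tendsto (uncurry s) l (𝓝 σ)) : σ = s u v := by
  obtain ⟨hnhds, hmem⟩ := tendsto_nhdsWithin_iff.1 (tendsto_id'.2 hl)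
  have hfst : Tendsto Prod.fst l (𝓝 u) := (continuous_fst.tendsto (u, v)).comp hnhds
  have hsnd : Tendsto Prod.snd l (𝓝 v) := (continuous_snd.tendsto (u, v)).comp hnhds
  have hzero : ∀ᶠ p in l, 0 < s p.1 p.2 ∧ Φ (s p.1 p.2 • p.1) p.2 = 0 := by
    filter_upwards [hmem, hfst.eventually_ne hu₀] with p hp hp₀
    obtain ⟨hpos, hp_zero, -⟩ := hs p.1 hp.1 hp₀ p.2 hp.2
    exact ⟨hpos, hp_zero⟩
  have hscaled : Tendsto (fun p ↦ (s p.1 p.2 • p.1, p.2)) l (𝓝[K ×ˢ D] (σ • u, v)) := by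
    refine tendsto_nhdsWithin_iff.2 ⟨(hlim.smul hfst).prodMk_nhds hsnd, ?_⟩
    filter_upwards [hmem, hzero] with p hp hp_zero
    exact ⟨hcone _ hp_zero.1.le p.1 hp.1, hp.2⟩
  have hΦlim := (hΦ (σ • u, v) ⟨hcone σ hσ.le u hu, hv⟩).tendsto.comp hscaled
  exact (hs u hu hu₀ v hv).2.2 σ hσ <| tendsto_nhds_unique hΦlim <|
    tendsto_const_nhds.congr' (hzero.mono fun p hp ↦ hp.2.symm)

lemma continuousWithinAt [TopologicalSpace Y] (hs : IsFiberZero K D Φ s)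
    (hcone : ∀ c : ℝ, 0 ≤ c → ∀ u ∈ K, c • u ∈ K) (hΦ : ContinuousOn (uncurry Φ) (K ×ˢ D))
    (hm : 0 < m) (hbound : ∀ u ∈ K, u ≠ 0 → ∀ v ∈ D, s u v * ‖u‖ ∈ Set.Ioo m M)
    (hu : u ∈ K) (hu₀ : u ≠ 0) (hv : v ∈ D) :
    ContinuousWithinAt (uncurry s) (K ×ˢ D) (u, v) := by
  have hnorm : 0 < ‖u‖ := norm_pos_iff.2 hu₀
  have hne : ∀ᶠ p in 𝓝[K ×ˢ D] (u, v), p.1 ≠ 0 :=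
    continuous_fst.continuousWithinAt.eventually_ne hu₀
  have hdiv {l : Filter (X × Y)} (hl : l ≤ 𝓝[K ×ˢ D] (u, v)) {q : ℝ}
      (hq : Tendsto (fun p ↦ s p.1 p.2 * ‖p.1‖) l (𝓝 q)) :
      Tendsto (uncurry s) l (𝓝 (q / ‖u‖)) := by
    have hfst : Tendsto (fun p : X × Y ↦ ‖p.1‖) l (𝓝 ‖u‖) :=
      (continuous_fst.norm.tendsto (u, v)).mono_left (hl.trans nhdsWithin_le_nhds)
    refine (hq.div hfst hnorm.ne').congr' ?_
    filter_upwards [hl hne] with p hp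
    exact mul_div_cancel_right₀ _ (norm_ne_zero_iff.2 hp)
  have hlim : Tendsto (fun p ↦ s p.1 p.2 * ‖p.1‖) (𝓝[K ×ˢ D] (u, v)) (𝓝 (s u v * ‖u‖)) := by
    refine isCompact_Icc.tendsto_nhds_of_unique_mapClusterPt (s := Set.Icc m M) ?_ fun q hq hcl ↦ ?_
    · filter_upwards [self_mem_nhdsWithin, hne] with p hp hp₀
      exact Set.Ioo_subset_Icc_self (hbound p.1 hp.1 hp₀ p.2 hp.2)
    · obtain ⟨l, hl, hlq⟩ := mapClusterPt_iff_ultrafilter.1 hcl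
      rw [← hs.eq_of_tendsto hcone hΦ hu hu₀ hv hl (div_pos (hm.trans_le hq.1) hnorm)
        (hdiv hl hlq), div_mul_cancel₀ _ hnorm.ne']
  simpa only [ContinuousWithinAt, mul_div_cancel_right₀ _ hnorm.ne', uncurry_apply_pair] using
    hdiv le_rfl hlim

end IsFiberZero

/-- The radial map of `K` onto the points on or below the Nehari set: `u` is pulled back to
`s u v • u` when it lies beyond that point of its ray, i.e. when `s u v < 1`, and is fixed
otherwise. -/
noncomputable def nehariTruncation (s : X → Y → ℝ) (p : X × Y) : X :=
  min 1 (s p.1 p.2) • p.1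

@[simp]
lemma nehariTruncation_zero (s : X → Y → ℝ) (v : Y) : nehariTruncation s (0, v) = 0 :=
  smul_zero _

lemma nehariTruncation_mem (hs : IsFiberZero K D Φ s)
    (hcone : ∀ c : ℝ, 0 ≤ c → ∀ u ∈ K, c • u ∈ K) (hu : u ∈ K) (hv : v ∈ D) :
    nehariTruncation s (u, v) ∈ K := by
  rcases eq_or_ne u 0 with rfl | hu₀
  · rwa [nehariTruncation_zero]
  · exact hcone _ (le_min zero_le_one (hs u hu hu₀ v hv).1.le) u hu

lemma norm_nehariTruncation_le (hs : IsFiberZero K D Φ s)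
    (hbound : ∀ u ∈ K, u ≠ 0 → ∀ v ∈ D, s u v * ‖u‖ ∈ Set.Ioo m M) (hu : u ∈ K) (hv : v ∈ D) :
    ‖nehariTruncation s (u, v)‖ ≤ |M| := by
  rcases eq_or_ne u 0 with rfl | hu₀
  · simp
  calc ‖nehariTruncation s (u, v)‖ = min 1 (s u v) * ‖u‖ := by
        rw [nehariTruncation,
          norm_smul_of_nonneg (le_min zero_le_one (hs u hu hu₀ v hv).1.le)]
    _ ≤ s u v * ‖u‖ := by gcongr; exact min_le_right _ _
    _ ≤ |M| := (hbound u hu hu₀ v hv).2.le.trans (le_abs_self M)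

lemma nehariTruncation_of_norm_lt
    (hbound : ∀ u ∈ K, u ≠ 0 → ∀ v ∈ D, s u v * ‖u‖ ∈ Set.Ioo m M) (hu : u ∈ K) (hv : v ∈ D)
    (hum : ‖u‖ < m) : nehariTruncation s (u, v) = u := by
  rcases eq_or_ne u 0 with rfl | hu₀
  · exact nehariTruncation_zero s v
  have hs₁ : 1 < s u v := by
    rw [← lt_mul_iff_one_lt_left (norm_pos_iff.2 hu₀)]
    exact hum.trans (hbound u hu hu₀ v hv).1
  rw [nehariTruncation, min_eq_left hs₁.le, one_smul]

lemma continuousOn_nehariTruncation [TopologicalSpace Y] (hs : IsFiberZero K D Φ s)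
    (hcone : ∀ c : ℝ, 0 ≤ c → ∀ u ∈ K, c • u ∈ K) (hΦ : ContinuousOn (uncurry Φ) (K ×ˢ D))
    (hm : 0 < m) (hbound : ∀ u ∈ K, u ≠ 0 → ∀ v ∈ D, s u v * ‖u‖ ∈ Set.Ioo m M) :
    ContinuousOn (nehariTruncation s) (K ×ˢ D) := by
  rintro ⟨u, v⟩ ⟨hu, hv⟩
  rcases eq_or_ne u 0 with rfl | hu₀
  · refine continuous_fst.continuousWithinAt.congr_of_eventuallyEq ?_ (nehariTruncation_zero s v)
    have hnear : ∀ᶠ p in 𝓝[K ×ˢ D] ((0 : X), v), ‖p.1‖ < m :=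
      continuous_fst.norm.continuousWithinAt.eventually_lt_const (by simpa using hm)
    filter_upwards [hnear, self_mem_nhdsWithin] with p hpm hp
    exact nehariTruncation_of_norm_lt hbound hp.1 hp.2 hpm
  · exact (tendsto_const_nhds.min (hs.continuousWithinAt hcone hΦ hm hbound hu hu₀ hv)).smul
      continuous_fst.continuousWithinAt

section FixedPoint

variable {T : X → Y → X} {F : X → X → ℝ}

lemma eq_of_nehariTruncation_eq (hs : IsFiberZero K D (fun u v ↦ F (T u v) u) s)
    (hF : ∀ u ∈ K, u ≠ 0 → ∀ c : ℝ, 0 < c → (F (c • u) u = 0 ↔ c = 1))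
    (hu : u ∈ K) (hv : v ∈ D) (hTu : T u v ∈ K) (hfix : nehariTruncation s (T u v, v) = u) :
    T u v = u := by
  rcases eq_or_ne (T u v) 0 with hTu₀ | hTu₀
  · rw [hTu₀] at hfix ⊢
    rw [← hfix, nehariTruncation_zero]
  obtain ⟨hpos, hzero, -⟩ := hs (T u v) hTu hTu₀ v hv
  rcases le_total 1 (s (T u v) v) with hle | hle
  · rwa [nehariTruncation, min_eq_left hle, one_smul] at hfix
  · simp only [nehariTruncation, min_eq_right hle] at hfix
    replace hzero : F (T u v) u = 0 := by simpa only [hfix] using hzero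
    have hTu_eq : T u v = (s (T u v) v)⁻¹ • u := (eq_inv_smul_iff₀ hpos.ne').2 hfix
    have hu₀ : u ≠ 0 := hfix ▸ smul_ne_zero hpos.ne' hTu₀
    have hinv := (hF u hu hu₀ _ (inv_pos.2 hpos)).1 (by rwa [hTu_eq] at hzero)
    rw [hTu_eq, hinv, one_smul]

lemma mem_nehariUb_of_eq [NormedAddCommGroup Y] [NormedSpace ℝ Y]
    (hs : IsFiberZero K D (fun u v ↦ F (T u v) u) s)
    (hF : ∀ u ∈ K, u ≠ 0 → ∀ c : ℝ, 0 < c → (F (c • u) u = 0 ↔ c = 1))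
    (hu : u ∈ K) (hu₀ : u ≠ 0) (hv : v ∈ D) (hfix : T u v = u) : (u, v) ∈ nehariUb K D s := by
  refine ⟨hu, hu₀, hv, ((hs u hu hu₀ v hv).2.2 1 one_pos ?_).symm⟩
  simpa only [one_smul, hfix] using (hF u hu hu₀ 1 one_pos).2 rfl

end FixedPoint

end Nehari

theorem nehari_schauder_fixed_point_general {X₁ X₂ : Type*}
    [NormedAddCommGroup X₁] [NormedSpace ℝ X₁] [NormedAddCommGroup X₂] [NormedSpace ℝ X₂]
    {K₁ : Set X₁} (hK₁closed : IsClosed K₁) (hK₁conv : Convex ℝ K₁)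
    (hK₁cone : ∀ c : ℝ, 0 ≤ c → ∀ u ∈ K₁, c • u ∈ K₁) (hK₁ne : K₁.Nonempty)
    {D : Set X₂} (hDne : D.Nonempty) (hDbdd : Bornology.IsBounded D)
    (hDclosed : IsClosed D) (hDconv : Convex ℝ D) {T₁ : X₁ → X₂ → X₁} {T₂ : X₁ → X₂ → X₂}
    (hTmaps : ∀ u ∈ K₁, ∀ v ∈ D, T₁ u v ∈ K₁ ∧ T₂ u v ∈ D)
    (hTcont : ContinuousOn (fun p : X₁ × X₂ ↦ (T₁ p.1 p.2, T₂ p.1 p.2)) (K₁ ×ˢ D))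
    (hTcompact : ∀ A ⊆ K₁ ×ˢ D, Bornology.IsBounded A →
      IsCompact (closure ((fun p : X₁ × X₂ ↦ (T₁ p.1 p.2, T₂ p.1 p.2)) '' A)))
    {F : X₁ → X₁ → ℝ} (hFcont : ContinuousOn (uncurry F) (K₁ ×ˢ K₁))
    (hF : ∀ u ∈ K₁, u ≠ 0 → ∀ c : ℝ, 0 < c → (F (c • u) u = 0 ↔ c = 1)) {s : X₁ → X₂ → ℝ}
    (h1 : IsFiberZero K₁ D (fun u v ↦ F (T₁ u v) u) s) {m M : ℝ} (hm : 0 < m)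
    (h2 : ∀ u ∈ K₁, ‖u‖ = 1 → ∀ v ∈ D, m < s u v ∧ s u v < M) :
    ∃ u ∈ K₁, ∃ v ∈ D, T₁ u v = u ∧ T₂ u v = v ∧
      ((∀ vb ∈ D, ¬(T₁ 0 vb = 0 ∧ T₂ 0 vb = vb)) → (u, v) ∈ nehariUb K₁ D s) := by
  have hbound (u) (hu : u ∈ K₁) (hu₀ : u ≠ 0) (v) (hv : v ∈ D) : s u v * ‖u‖ ∈ Set.Ioo m M :=
    h1.mul_norm_mem_Ioo hK₁cone h2 hu hu₀ hv
  have hΦ : ContinuousOn (uncurry fun u v ↦ F (T₁ u v) u) (K₁ ×ˢ D) :=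
    hFcont.comp (hTcont.fst.prodMk continuousOn_fst) fun p hp ↦ ⟨(hTmaps _ hp.1 _ hp.2).1, hp.1⟩
  let H (p : X₁ × X₂) : X₁ × X₂ := (nehariTruncation s p, p.2)
  let C : Set (X₁ × X₂) := (K₁ ∩ Metric.closedBall 0 |M|) ×ˢ D
  have hHcont : ContinuousOn H (K₁ ×ˢ D) :=
    (continuousOn_nehariTruncation h1 hK₁cone hΦ hm hbound).prodMk continuousOn_snd
  have hHmaps : Set.MapsTo H (K₁ ×ˢ D) C := fun p hp ↦
    ⟨⟨nehariTruncation_mem h1 hK₁cone hp.1 hp.2, mem_closedBall_zero_iff.2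
      (norm_nehariTruncation_le h1 hbound hp.1 hp.2)⟩, hp.2⟩
  have hCK : C ⊆ K₁ ×ˢ D := Set.prod_mono_left Set.inter_subset_left
  have hCconv : Convex ℝ C := (hK₁conv.inter (convex_closedBall 0 _)).prod hDconv
  have hCne : C.Nonempty := ((hK₁ne.prod hDne).image H).mono hHmaps.image_subset
  have hCbdd : Bornology.IsBounded C :=
    (Metric.isBounded_closedBall.subset Set.inter_subset_right).prod hDbdd
  obtain ⟨⟨u, v⟩, ⟨⟨hu, -⟩, hv⟩, hfix⟩ := exists_fixedPoint_comp_of_isCompact_closure_image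
    hCconv hCne (hK₁closed.prod hDclosed) (hTcont.mono hCK)
    (fun p hp ↦ hTmaps p.1 hp.1.1 p.2 hp.2) (hTcompact C hCK hCbdd) hHcont hHmaps
  obtain ⟨hfix₁ : nehariTruncation s (T₁ u v, T₂ u v) = u, hfix₂ : T₂ u v = v⟩ :=
    Prod.ext_iff.1 hfix
  rw [hfix₂] at hfix₁
  have hT₁ : T₁ u v = u := eq_of_nehariTruncation_eq h1 hF hu hv (hTmaps u hu v hv).1 hfix₁
  refine ⟨u, hu, v, hv, hT₁, hfix₂, fun hno ↦ mem_nehariUb_of_eq h1 hF hu ?_ hv hT₁⟩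
  rintro rfl
  exact hno v hv ⟨hT₁, hfix₂⟩

theorem nehari_schauder_fixed_point
    {X₁ X₂ : Type*}
    [NormedAddCommGroup X₁] [NormedSpace ℝ X₁] [CompleteSpace X₁]
    [NormedAddCommGroup X₂] [NormedSpace ℝ X₂] [CompleteSpace X₂]
    -- K₁ is a non-degenerate cone
    (K₁ : Set X₁) (hK₁closed : IsClosed K₁) (hK₁conv : Convex ℝ K₁)
    (hK₁cone : ∀ lam : ℝ, 0 ≤ lam → ∀ u ∈ K₁, lam • u ∈ K₁)
    (hK₁nondeg : ∃ u ∈ K₁, u ≠ 0)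
    -- D is nonempty, bounded, closed, convex
    (D : Set X₂) (hDne : D.Nonempty) (hDbdd : Bornology.IsBounded D)
    (hDclosed : IsClosed D) (hDconv : Convex ℝ D)
    -- T = (T₁,T₂) : K₁ × D → K₁ × D is completely continuous
    (T₁ : X₁ → X₂ → X₁) (T₂ : X₁ → X₂ → X₂)
    (hTmaps : ∀ u ∈ K₁, ∀ v ∈ D, T₁ u v ∈ K₁ ∧ T₂ u v ∈ D)
    (hTcont : ContinuousOn (fun p : X₁ × X₂ => (T₁ p.1 p.2, T₂ p.1 p.2)) (K₁ ×ˢ D))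
    (hTcompact : ∀ A ⊆ K₁ ×ˢ D, Bornology.IsBounded A →
      IsCompact (closure ((fun p : X₁ × X₂ => (T₁ p.1 p.2, T₂ p.1 p.2)) '' A)))
    -- the functional 𝓕 : K₁ × K₁ → ℝ, continuous, with 𝓕(λu,u)=0 ↔ λ=1
    (F : X₁ → X₁ → ℝ)
    (hFcont : ContinuousOn (fun p : X₁ × X₁ => F p.1 p.2) (K₁ ×ˢ K₁))
    (hF : ∀ u ∈ K₁, u ≠ 0 → ∀ lam : ℝ, 0 < lam → (F (lam • u) u = 0 ↔ lam = 1))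
    -- condition (h1): s(u,v) is the unique positive zero
    (s : X₁ → X₂ → ℝ)
    (h1 : ∀ u ∈ K₁, u ≠ 0 → ∀ v ∈ D,
      0 < s u v ∧ F (T₁ (s u v • u) v) (s u v • u) = 0 ∧
      ∀ σ : ℝ, 0 < σ → F (T₁ (σ • u) v) (σ • u) = 0 → σ = s u v)
    -- condition (h2): m < s < M on the unit sphere of the cone, times D
    (m M : ℝ) (hm : 0 < m) (hmM : m < M)
    (h2 : ∀ u ∈ K₁, ‖u‖ = 1 → ∀ v ∈ D, m < s u v ∧ s u v < M) :
    ∃ u ∈ K₁, ∃ v ∈ D, T₁ u v = u ∧ T₂ u v = v ∧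
      ((∀ vb ∈ D, ¬ (T₁ 0 vb = 0 ∧ T₂ 0 vb = vb)) → (u, v) ∈ nehariUb K₁ D s) :=
  nehari_schauder_fixed_point_general hK₁closed hK₁conv hK₁cone (hK₁nondeg.imp fun _ ↦ And.left)
    hDne hDbdd hDclosed hDconv hTmaps hTcont hTcompact hFcont hF h1 hm h2
end

section
/- (Nehari type fixed point theorem for a single equation.) Assume conditions (c1) and (c2). Then the operator T has a fixed point u ∈ K. If, in addition, 0 is not a fixed point of T, then s(u) = 1 (equivalently, 𝓕(T(u), u) = 0 with u ≠ 0). -/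
/-!
The Nehari manifold `N = {u ∈ K | 𝓕(T(u), u) = 0}` meets the ray through each `u ≠ 0` exactly in
`s(u)u`. Since `N` is closed and `s` takes values in a compact interval of positive numbers on the
unit sphere, `s` is continuous there by the closed graph property, and by homogeneity it is
continuous away from `0`. The truncation `ρ(u) = min(1, s(u))u` is therefore continuous with bounded
image, and `T ∘ ρ` has a fixed point `v` by Schauder's theorem. If `s(v) < 1`, then `w = s(v)v` lies
on `N` and satisfies `T(w) = v = s(v)⁻¹w`, so `𝓕(s(v)⁻¹w, w) = 0` forces `s(v) = 1`. Hence
`ρ(v) = v` and `T(v) = v`.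

Schauder's theorem is reduced to Brouwer's, and Brouwer's theorem on a simplex is obtained from
Scarf's lemma, a parity argument on finitely many points that avoids triangulations.
-/

open Filter Finset Topology

section ImageErase

variable {α β : Type*} [DecidableEq α] [DecidableEq β] {s : Finset α} {f : α → β} {a b : α}

theorem image_erase_eq_image_of_map_eq (ha : a ∈ s) (hab : a ≠ b) (hf : f a = f b) :
    (s.erase b).image f = s.image f := by
  refine (image_subset_image (erase_subset b s)).antisymm fun y hy ↦ ?_
  obtain ⟨x, hx, rfl⟩ := mem_image.1 hy
  obtain rfl | hxb := eq_or_ne x b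
  · exact mem_image.2 ⟨a, mem_erase.2 ⟨hab, ha⟩, hf⟩
  · exact mem_image_of_mem f (mem_erase.2 ⟨hxb, hx⟩)

theorem card_filter_image_erase_eq_two (h : #s = #(s.image f) + 1) :
    #{x ∈ s | (s.erase x).image f = s.image f} = 2 := by
  obtain ⟨a, ha, b, hb, hab, hf⟩ :=
    exists_ne_map_eq_of_card_lt_of_maps_to (t := s.image f) (by omega)
      fun x hx ↦ mem_image_of_mem f hx
  refine card_eq_two.2 ⟨a, b, hab, ?_⟩
  ext x
  simp only [mem_filter, Finset.mem_insert, Finset.mem_singleton]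
  refine ⟨fun ⟨hx, himage⟩ ↦ ?_, ?_⟩
  · by_contra! hxab
    have ha' : a ∈ s.erase x := mem_erase.2 ⟨hxab.1.symm, ha⟩
    have hb' : b ∈ s.erase x := mem_erase.2 ⟨hxab.2.symm, hb⟩
    have hcard : #(s.image f) ≤ #((s.erase x).erase b) := by
      rw [← himage, ← image_erase_eq_image_of_map_eq ha' hab hf]
      exact card_image_le
    have hpos : 0 < #(s.erase x) := card_pos.2 ⟨a, ha'⟩
    rw [card_erase_of_mem hb'] at hcard
    rw [card_erase_of_mem hx] at hcard hpos
    omega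
  · rintro (rfl | rfl)
    · exact ⟨ha, image_erase_eq_image_of_map_eq hb hab.symm hf.symm⟩
    · exact ⟨hb, image_erase_eq_image_of_map_eq ha hab hf⟩

end ImageErase

section Doors

variable {I V : Type*} [Fintype I] [DecidableEq I] [Fintype V] {c : V → I} {i : I} {W : Finset V}

/-- Scarf's *doors*: the sets that exhaust all colours but `i` and have just one point less than
there are colours. -/
def doors (c : V → I) (i : I) : Finset (Finset V) :=
  {W | #W + 1 = Fintype.card I ∧ W.image c = univ.erase i}

theorem mem_doors : W ∈ doors c i ↔ #W + 1 = Fintype.card I ∧ W.image c = univ.erase i := by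
  simp [doors]

theorem image_erase_mem_doors [DecidableEq V] {e : I → V} (hce : Function.LeftInverse c e) :
    (univ.erase i).image e ∈ doors c i := by
  refine mem_doors.2 ⟨?_, ?_⟩
  · rw [card_image_of_injective _ hce.injective, card_erase_add_one (mem_univ i), card_univ]
  · rw [image_image, hce.comp_eq_id, image_id]

theorem exists_notMem_range_of_mem_doors [DecidableEq V] {e : I → V}
    (hce : Function.LeftInverse c e) (hW : W ∈ doors c i) (hne : W ≠ (univ.erase i).image e) :
    ∃ x ∈ W, x ∉ Set.range e := by
  by_contra! hrange
  refine hne ?_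
  rw [← (mem_doors.1 hW).2, image_image]
  refine ((image_congr fun x hx ↦ ?_).trans image_id).symm
  obtain ⟨j, rfl⟩ := hrange x hx
  exact congrArg e (hce j)

open scoped Classical in
theorem even_card_filter_doors_covBy {R : Finset V} (hR : #R = Fintype.card I)
    (hc : R.image c ≠ univ) : Even #{W ∈ doors c i | W ⋖ R} := by
  obtain hempty | ⟨W, hW⟩ := ({W ∈ doors c i | W ⋖ R} : Finset _).eq_empty_or_nonempty
  · simp [hempty]
  obtain ⟨hWdoor, hWR⟩ := mem_filter.1 hW
  have hRimage : R.image c = univ.erase i := by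
    have hsub : univ.erase i ⊆ R.image c := (mem_doors.1 hWdoor).2 ▸ image_subset_image hWR.le
    have hi : i ∉ R.image c := fun hi ↦
      hc (univ_subset_iff.1 (insert_erase (mem_univ i) ▸ insert_subset hi hsub))
    exact (subset_erase.2 ⟨subset_univ _, hi⟩).antisymm hsub
  have hdoors : ({W ∈ doors c i | W ⋖ R} : Finset _) =
      ({x ∈ R | (R.erase x).image c = R.image c} : Finset V).image R.erase := by
    ext W
    simp only [mem_filter, mem_doors, Finset.mem_image, hRimage, Finset.covBy_iff_exists_erase]
    constructor
    · rintro ⟨⟨-, himage⟩, x, hx, rfl⟩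
      exact ⟨x, ⟨hx, himage⟩, rfl⟩
    · rintro ⟨x, ⟨hx, himage⟩, rfl⟩
      exact ⟨⟨hR ▸ card_erase_add_one hx, himage⟩, x, hx, rfl⟩
  rw [hdoors, card_image_of_injOn (R.erase_injOn.mono (coe_subset.2 (filter_subset _ _))),
    card_filter_image_erase_eq_two]
  · exact even_two
  · rw [hRimage, card_erase_add_one (mem_univ i), hR, card_univ]

end Doors

section Scarf

variable {I V α : Type*} [LinearOrder α] {r : I → V → α} {e : I → V} {W : Finset V} {μ : I → V}
  {y : V} {k : I}

/-- Scarf's notion of a *dominating* (or primitive) set with respect to a family of rankings: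
no point lies strictly above the minima of `W` in all rankings at once. -/
def IsDominating (r : I → V → α) (W : Finset V) : Prop :=
  ∀ y, ∃ i, ∀ x ∈ W, r i y ≤ r i x

/-- `μ` selects, for every ranking, a lowest element of `W`. -/
def IsArgmin (r : I → V → α) (W : Finset V) (μ : I → V) : Prop :=
  ∀ i, μ i ∈ W ∧ ∀ x ∈ W, r i (μ i) ≤ r i x

/-- The points that lie strictly above `μ` in every ranking except possibly the `k`-th. -/
def aboveExcept (r : I → V → α) (μ : I → V) (k : I) : Set V :=
  {y | ∀ l, l ≠ k → r l (μ l) < r l y}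

/-- Injective rankings with *slack* points `e i`, which play the role of the facets of a simplex:
`e i` is lowest in the `i`-th ranking and lies above all non-slack points in the other ones. -/
structure IsSlack (r : I → V → α) (e : I → V) : Prop where
  injective : ∀ i, Function.Injective (r i)
  slack_le : ∀ i v, r i (e i) ≤ r i v
  lt_slack : ∀ {i l x}, l ≠ i → x ∉ Set.range e → r l x < r l (e i)

theorem exists_isArgmin (r : I → V → α) (hW : W.Nonempty) : ∃ μ, IsArgmin r W μ :=
  Classical.axiomOfChoice fun i ↦ W.exists_min_image (r i) hW

theorem IsDominating.mono {W' : Finset V} (h : IsDominating r W') (hW : W ⊆ W') :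
    IsDominating r W :=
  fun y ↦ (h y).imp fun _ hi x hx ↦ hi x (hW hx)

theorem IsDominating.le_of_mem_aboveExcept (h : IsDominating r W) (hμ : ∀ i, μ i ∈ W)
    (hy : y ∈ aboveExcept r μ k) : ∀ x ∈ W, r k y ≤ r k x := by
  obtain ⟨i, hi⟩ := h y
  obtain rfl | hik := eq_or_ne i k
  · exact hi
  · exact absurd (hi _ (hμ i)) (hy i hik).not_ge

theorem IsArgmin.eq_of_forall_le (hr : ∀ i, Function.Injective (r i)) (hμ : IsArgmin r W μ)
    {i : I} (hy : y ∈ W) (hle : ∀ x ∈ W, r i y ≤ r i x) : μ i = y :=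
  hr i (((hμ i).2 y hy).antisymm (hle _ (hμ i).1))

variable [DecidableEq V]

theorem IsArgmin.image_univ [Fintype I] (hr : ∀ i, Function.Injective (r i)) (hμ : IsArgmin r W μ)
    (h : IsDominating r W) : univ.image μ = W := by
  refine (image_subset_iff.2 fun i _ ↦ (hμ i).1).antisymm fun x hx ↦ ?_
  obtain ⟨i, hi⟩ := h x
  exact mem_image.2 ⟨i, mem_univ i, hμ.eq_of_forall_le hr hx hi⟩

theorem IsDominating.exists_isMaxOn_of_insert [Fintype I] [DecidableEq I]
    (hr : ∀ i, Function.Injective (r i))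
    (hμ : IsArgmin r W μ) (hcard : #W + 1 = Fintype.card I) (hy : y ∉ W)
    (h : IsDominating r (insert y W)) :
    ∃ k, (univ.erase k).image μ = W ∧ y ∈ aboveExcept r μ k ∧
      IsMaxOn (r k) (aboveExcept r μ k) y := by
  -- `insert y W` has as many points as there are rankings, so its minima are pairwise distinct
  -- and `y` is the minimum of exactly one ranking `k`.
  obtain ⟨ν, hν⟩ := exists_isArgmin r (insert_nonempty y W)
  have hνimage : univ.image ν = insert y W := hν.image_univ hr h
  have hνinj : Function.Injective ν := by
    rw [← Set.injOn_univ, ← coe_univ, ← card_image_iff, hνimage, card_insert_of_notMem hy, hcard,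
      card_univ]
  obtain ⟨k, -, rfl⟩ := mem_image.1 (hνimage ▸ mem_insert_self y W)
  have hνW : ∀ l, l ≠ k → ν l ∈ W := fun l hl ↦
    mem_of_mem_insert_of_ne (hν l).1 (hνinj.ne hl)
  have hμν : ∀ l, l ≠ k → μ l = ν l := fun l hl ↦
    hμ.eq_of_forall_le hr (hνW l hl) fun x hx ↦ (hν l).2 x (mem_insert_of_mem hx)
  have habove : ν k ∈ aboveExcept r μ k := fun l hl ↦ by
    rw [hμν l hl]
    exact ((hν l).2 _ (mem_insert_self _ _)).lt_of_ne ((hr l).ne (hνinj.ne hl))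
  refine ⟨k, ?_, habove, fun z hz ↦ ?_⟩
  · rw [image_congr (g := ν) fun l hl ↦ hμν l (ne_of_mem_erase hl), image_erase hνinj, hνimage,
      erase_insert hy]
  · exact h.le_of_mem_aboveExcept (fun i ↦ mem_insert_of_mem (hμ i).1) hz _ (mem_insert_self _ _)

theorem IsDominating.insert_of_isMaxOn [Fintype I] [DecidableEq I] (hW : IsDominating r W)
    (hμ : IsArgmin r W μ)
    (hk : (univ.erase k).image μ = W) (hy : y ∈ aboveExcept r μ k)
    (hmax : IsMaxOn (r k) (aboveExcept r μ k) y) : y ∉ W ∧ IsDominating r (insert y W) := by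
  refine ⟨fun hyW ↦ ?_, fun z ↦ ?_⟩
  · obtain ⟨l, hl, rfl⟩ := mem_image.1 (hk ▸ hyW)
    exact (hy l (ne_of_mem_erase hl)).false
  by_cases hz : z ∈ aboveExcept r μ k
  · refine ⟨k, forall_mem_insert .. |>.2 ⟨hmax hz, ?_⟩⟩
    exact hW.le_of_mem_aboveExcept (fun i ↦ (hμ i).1) hz
  · obtain ⟨l, hl, hzl⟩ : ∃ l, l ≠ k ∧ r l z ≤ r l (μ l) := by
      simpa only [aboveExcept, Set.mem_ofPred_eq, not_forall, not_lt, exists_prop] using hz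
    exact ⟨l, forall_mem_insert .. |>.2 ⟨hzl.trans (hy l hl).le, fun x hx ↦
      hzl.trans ((hμ l).2 x hx)⟩⟩

variable [Fintype V]

open scoped Classical in
/-- The points whose adjunction to `W` gives a dominating set with one more element. -/
noncomputable def completions (r : I → V → α) (W : Finset V) : Finset V :=
  {y | y ∉ W ∧ IsDominating r (insert y W)}

theorem mem_completions : y ∈ completions r W ↔ y ∉ W ∧ IsDominating r (insert y W) := by
  simp [completions]

variable [Fintype I]

theorem IsSlack.card_completions_eq_two (hr : IsSlack r e) (hW : IsDominating r W)
    (hcard : #W + 1 = Fintype.card I) {x : V} (hx : x ∈ W) (hxe : x ∉ Set.range e) :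
    #(completions r W) = 2 := by
  classical
  obtain ⟨μ, hμ⟩ := exists_isArgmin r ⟨x, hx⟩
  have hμimage : univ.image μ = W := hμ.image_univ hr.injective hW
  have hnonempty : ∀ k, (aboveExcept r μ k).Nonempty := fun k ↦
    ⟨e k, fun l hl ↦ ((hμ l).2 x hx).trans_lt (hr.lt_slack hl hxe)⟩
  choose y hy hmax using fun k ↦ Set.exists_max_image _ (r k) (Set.toFinite _) (hnonempty k)
  have hyinj : Function.Injective y := fun k l hkl ↦ by
    by_contra hne
    exact ((hy l k hne).trans_le (hkl ▸ hW.le_of_mem_aboveExcept (fun i ↦ (hμ i).1) (hy k) _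
      (hμ k).1)).false
  have hcompletions : completions r W =
      ({k ∈ univ | (univ.erase k).image μ = univ.image μ} : Finset I).image y := by
    ext z
    simp only [mem_completions, Finset.mem_image, Finset.mem_filter, Finset.mem_univ, true_and,
      hμimage]
    constructor
    · rintro ⟨hz, hdom⟩
      obtain ⟨k, hk, hzk, hzmax⟩ := hdom.exists_isMaxOn_of_insert hr.injective hμ hcard hz
      exact ⟨k, hk, hr.injective k ((hzmax (hy k)).antisymm (hmax k z hzk))⟩
    · rintro ⟨k, hk, rfl⟩
      exact hW.insert_of_isMaxOn hμ hk (hy k) (hmax k)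
  rw [hcompletions, card_image_of_injective _ hyinj]
  exact card_filter_image_erase_eq_two (by rw [hμimage, hcard, card_univ])

theorem IsSlack.even_card_completions (hr : IsSlack r e) (hcard : #W + 1 = Fintype.card I)
    {x : V} (hx : x ∈ W) (hxe : x ∉ Set.range e) : Even #(completions r W) := by
  obtain hempty | ⟨y, hy⟩ := (completions r W).eq_empty_or_nonempty
  · simp [hempty]
  · have hW : IsDominating r W := (mem_completions.1 hy).2.mono (subset_insert y W)
    exact hr.card_completions_eq_two hW hcard hx hxe ▸ even_two

theorem IsSlack.mem_completions_image_erase [DecidableEq I] (hr : IsSlack r e) {i : I} :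
    y ∈ completions r ((univ.erase i).image e) ↔
      y ∉ (univ.erase i).image e ∧ ∀ z ∉ (univ.erase i).image e, r i z ≤ r i y := by
  refine mem_completions.trans (and_congr_right fun hy ↦ ⟨fun hdom z hz ↦ ?_, fun hmax z ↦ ?_⟩)
  · obtain ⟨l, hl⟩ := hdom z
    obtain rfl | hli := eq_or_ne l i
    · exact hl y (mem_insert_self _ _)
    · have hel : e l ∈ (univ.erase i).image e := mem_image_of_mem e (by simp [hli])
      have hzl : z = e l := hr.injective l
        ((hl _ (mem_insert_of_mem hel)).antisymm (hr.slack_le l z))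
      exact absurd (hzl ▸ hel) hz
  · by_cases hz : z ∈ (univ.erase i).image e
    · obtain ⟨l, -, rfl⟩ := mem_image.1 hz
      exact ⟨l, fun x _ ↦ hr.slack_le l x⟩
    · refine ⟨i, forall_mem_insert .. |>.2 ⟨hmax z hz, fun x hx ↦ ?_⟩⟩
      by_cases hze : z ∈ Set.range e
      · obtain ⟨l, rfl⟩ := hze
        obtain rfl : l = i := by
          by_contra hli
          exact hz (mem_image_of_mem e (by simp [hli]))
        exact hr.slack_le l x
      · obtain ⟨l, hl, rfl⟩ := mem_image.1 hx
        exact (hr.lt_slack (ne_of_mem_erase hl).symm hze).le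

theorem IsSlack.card_completions_image_erase [DecidableEq I] (hr : IsSlack r e)
    (he : Function.Injective e) (i : I) : #(completions r ((univ.erase i).image e)) = 1 := by
  have hei : e i ∈ ((univ.erase i).image e)ᶜ := by
    simp [he.eq_iff]
  obtain ⟨y, hy, hmax⟩ := exists_max_image _ (r i) ⟨e i, hei⟩
  simp only [Finset.mem_compl] at hy hmax
  refine card_eq_one.2 ⟨y, ?_⟩
  ext z
  rw [hr.mem_completions_image_erase, Finset.mem_singleton]
  refine ⟨fun ⟨hz, hzmax⟩ ↦ hr.injective i ((hmax z hz).antisymm (hzmax y hy)), ?_⟩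
  rintro rfl
  exact ⟨hy, hmax⟩

open scoped Classical in
theorem card_filter_isDominating_covBy (hcard : #W + 1 = Fintype.card I) :
    #{R | (#R = Fintype.card I ∧ IsDominating r R) ∧ W ⋖ R} = #(completions r W) := by
  have hrooms : ({R | (#R = Fintype.card I ∧ IsDominating r R) ∧ W ⋖ R} : Finset (Finset V)) =
      (completions r W).image (insert · W) := by
    ext R
    simp only [mem_filter_univ, Finset.mem_image, mem_completions, Finset.covBy_iff_exists_insert]
    constructor
    · rintro ⟨⟨-, hR⟩, y, hy, rfl⟩
      exact ⟨y, ⟨hy, hR⟩, rfl⟩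
    · rintro ⟨y, ⟨hy, hR⟩, rfl⟩
      exact ⟨⟨by rw [card_insert_of_notMem hy, hcard], hR⟩, y, hy, rfl⟩
  rw [hrooms, card_image_of_injOn]
  exact (insert_inj_on W).mono fun y hy ↦ (mem_completions.1 hy).1

end Scarf

/-- **Scarf's lemma**. -/
theorem IsSlack.exists_isDominating_image_eq_univ {I V α : Type*} [Fintype I] [DecidableEq I]
    [Nonempty I] [Finite V] [LinearOrder α] {r : I → V → α} {e : I → V} (hr : IsSlack r e)
    {c : V → I} (hce : Function.LeftInverse c e) :
    ∃ R, IsDominating r R ∧ R.image c = univ := by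
  classical
  have := Fintype.ofFinite V
  by_contra! hrainbow
  obtain ⟨i⟩ := ‹Nonempty I›
  let rooms : Finset (Finset V) := {R | #R = Fintype.card I ∧ IsDominating r R}
  have hcount : ∑ W ∈ doors c i, #(completions r W) = ∑ R ∈ rooms, #{W ∈ doors c i | W ⋖ R} := by
    refine .trans (sum_congr rfl fun W hW ↦ ?_)
      (sum_card_bipartiteAbove_eq_sum_card_bipartiteBelow (· ⋖ ·))
    rw [← card_filter_isDominating_covBy (mem_doors.1 hW).1, bipartiteAbove, filter_filter]
  have hodd : Odd (∑ W ∈ doors c i, #(completions r W)) := by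
    rw [← add_sum_erase _ _ (image_erase_mem_doors hce),
      hr.card_completions_image_erase hce.injective]
    refine odd_one.add_even (even_sum _ fun W hW ↦ ?_)
    obtain ⟨hne, hdoor⟩ := mem_erase.1 hW
    obtain ⟨x, hx, hxe⟩ := exists_notMem_range_of_mem_doors hce hdoor hne
    exact hr.even_card_completions (mem_doors.1 hdoor).1 hx hxe
  refine Nat.not_even_iff_odd.2 hodd (hcount ▸ even_sum _ fun R hR ↦ ?_)
  obtain ⟨hRcard, hRdom⟩ := mem_filter_univ _ |>.1 hR
  exact even_card_filter_doors_covBy hRcard (hrainbow R hRdom)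

-- Ties are broken by an enumeration, and `C` collects the colours whose slack point is not used.
theorem exists_subset_image_forall_exists_le {G I β : Type*} [Finite G] [Finite I]
    [DecidableEq I] [Nonempty I] [LinearOrder β] (h : I → G → β) (c : G → I) :
    ∃ (R : Finset G) (C : Finset I), C ⊆ R.image c ∧ ∀ y, ∃ i ∈ C, ∀ x ∈ R, h i y ≤ h i x := by
  classical
  have := Fintype.ofFinite I
  let height (i : I) : G ⊕ I → WithBot (WithTop β) :=
    Sum.elim (fun x ↦ ↑(↑(h i x) : WithTop β)) fun j ↦ if j = i then ⊥ else ↑(⊤ : WithTop β)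
  obtain ⟨n, ⟨κ⟩⟩ := Finite.exists_equiv_fin (G ⊕ I)
  let r (i : I) (v : G ⊕ I) : WithBot (WithTop β) ×ₗ Fin n := toLex (height i v, κ v)
  have height_le {i v w} (hle : r i v ≤ r i w) : height i v ≤ height i w :=
    Prod.Lex.monotone_fst _ _ hle
  have hr : IsSlack r Sum.inr := by
    refine ⟨fun i v w hvw ↦ ?_, fun i v ↦ ?_, fun {i l x} hli hx ↦ ?_⟩
    · exact κ.injective (congrArg (fun p ↦ (ofLex p).2) hvw)
    · obtain rfl | hv := eq_or_ne v (Sum.inr i)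
      · exact le_rfl
      · refine Prod.Lex.toLex_le_toLex.2 (Or.inl ?_)
        obtain x | j := v <;> simp_all [height]
    · obtain y | j := x
      · refine Prod.Lex.toLex_lt_toLex.2 (Or.inl ?_)
        simpa only [height, Sum.elim_inl, Sum.elim_inr, if_neg hli.symm] using
          WithBot.coe_lt_coe.2 (WithTop.coe_lt_top (h l y))
      · exact absurd ⟨j, rfl⟩ hx
  obtain ⟨R, hR, hRc⟩ := hr.exists_isDominating_image_eq_univ (c := Sum.elim c id) fun _ ↦ rfl
  refine ⟨R.toLeft, ({i | Sum.inr i ∉ R} : Finset I), fun i hi ↦ ?_, fun y ↦ ?_⟩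
  · obtain ⟨x | j, hx, hxi⟩ := mem_image.1 (hRc ▸ mem_univ i)
    · exact mem_image.2 ⟨x, mem_toLeft.2 hx, hxi⟩
    · obtain rfl : j = i := hxi
      exact absurd hx (by simpa using hi)
  · obtain ⟨i, hi⟩ := hR (Sum.inl y)
    refine ⟨i, mem_filter_univ _ |>.2 fun hiR ↦ ?_, fun x hx ↦ ?_⟩
    · simpa [height] using height_le (hi _ hiR)
    · simpa [height] using height_le (hi _ (mem_toLeft.1 hx))

section Simplex

variable {I : Type*} [Fintype I]

theorem lt_add_of_mem_stdSimplex {x a : I → ℝ} {η : ℝ} (hx : x ∈ stdSimplex ℝ I) (hax : a ≤ x)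
    (hsum : 1 < ∑ i, a i + η) (i : I) : x i < a i + η := by
  have hle : x i - a i ≤ ∑ j, (x j - a j) :=
    single_le_sum (f := fun j ↦ x j - a j) (fun j _ ↦ sub_nonneg.2 (hax j)) (mem_univ i)
  rw [sum_sub_distrib, hx.2] at hle
  linarith

variable [Nonempty I]

theorem exists_mem_stdSimplex_ge {b : I → ℝ} (hb : 0 ≤ b) (hsum : ∑ i, b i ≤ 1) :
    ∃ z ∈ stdSimplex ℝ I, b ≤ z := by
  classical
  let i := Classical.arbitrary I
  have hle : b ≤ b + Pi.single i (1 - ∑ i, b i) :=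
    le_add_of_nonneg_right (Pi.single_nonneg.2 (sub_nonneg.2 hsum))
  exact ⟨_, ⟨fun j ↦ (hb.trans hle) j, by simp [sum_add_distrib]⟩, hle⟩

theorem one_lt_sum_add_of_subset_iUnion_ball {t : Set (I → ℝ)} {δ : ℝ} {a : I → ℝ}
    (ht : stdSimplex ℝ I ⊆ ⋃ x ∈ t, Metric.ball x δ) (hδ : 0 ≤ δ) (ha : 0 ≤ a)
    (hta : ∀ y ∈ t, ∃ i, y i ≤ a i) : 1 < ∑ i, (a i + δ) := by
  by_contra! hle
  obtain ⟨z, hz, haz⟩ := exists_mem_stdSimplex_ge (fun i ↦ add_nonneg (ha i) hδ) hle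
  obtain ⟨y, hy, hzy⟩ := Set.mem_iUnion₂.1 (ht hz)
  obtain ⟨i, hi⟩ := hta y hy
  have hzyi : dist (z i) (y i) < δ := (dist_le_pi_dist z y i).trans_lt hzy
  linarith [haz i, (abs_sub_lt_iff.1 hzyi).1]

theorem exists_dist_lt_or_lt {A : I → Set (I → ℝ)} (hA : stdSimplex ℝ I ⊆ ⋃ i, A i) {ε : ℝ}
    (hε : 0 < ε) : ∃ x ∈ stdSimplex ℝ I, ∀ i, (∃ y ∈ A i, dist x y < ε) ∨ x i < ε := by
  classical
  let δ := ε / Fintype.card I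
  have hδ : 0 < δ := by positivity
  obtain ⟨t, hts, htfin, ht⟩ := finite_cover_balls_of_compact (isCompact_stdSimplex ℝ I) hδ
  have := htfin.to_subtype
  choose c hc using fun x : t ↦ Set.mem_iUnion.1 (hA (hts x.2))
  obtain ⟨R, C, hC, hRC⟩ := exists_subset_image_forall_exists_le (fun i (x : t) ↦ x.1 i) c
  have hR : R.Nonempty := by
    obtain ⟨y, hy, -⟩ := Set.mem_iUnion₂.1 (ht (single_mem_stdSimplex ℝ (Classical.arbitrary I)))
    obtain ⟨i, hi, -⟩ := hRC ⟨y, hy⟩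
    exact image_nonempty.1 ⟨i, hC hi⟩
  let a (i : I) : ℝ := if i ∈ C then R.inf' hR fun x ↦ x.1 i else 0
  have ha_le : ∀ x ∈ R, a ≤ x.1 := fun x hx i ↦ by
    by_cases hi : i ∈ C
    · simpa only [a, if_pos hi] using inf'_le _ hx
    · simpa only [a, if_neg hi] using (hts x.2).1 i
  have ha : 0 ≤ a := fun i ↦ by
    by_cases hi : i ∈ C
    · simpa only [a, if_pos hi, Pi.zero_apply] using
        le_inf' hR (fun x ↦ x.1 i) fun x _ ↦ (hts x.2).1 i
    · simp [a, hi]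
  have hsum : 1 < ∑ i, a i + ε := by
    have hta : ∀ y ∈ t, ∃ i, y i ≤ a i := fun y hy ↦ by
      obtain ⟨i, hi, hyi⟩ := hRC ⟨y, hy⟩
      exact ⟨i, by simpa only [a, if_pos hi] using le_inf' hR _ hyi⟩
    simpa [sum_add_distrib, δ, mul_div_cancel₀] using
      one_lt_sum_add_of_subset_iUnion_ball ht hδ.le ha hta
  -- The coordinates of `a` nearly sum to `1`, so all points of the simplex above `a` are close.
  have hlt : ∀ x ∈ R, ∀ i, x.1 i < a i + ε := fun x hx ↦
    lt_add_of_mem_stdSimplex (hts x.2) (ha_le x hx) hsum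
  obtain ⟨x, hx⟩ := hR
  refine ⟨x, hts x.2, fun i ↦ ?_⟩
  by_cases hi : i ∈ C
  · obtain ⟨y, hy, rfl⟩ := mem_image.1 (hC hi)
    refine Or.inl ⟨y, hc y, (dist_pi_lt_iff hε).2 fun j ↦ abs_sub_lt_iff.2 ?_⟩
    constructor <;> linarith [hlt x hx j, hlt y hy j, ha_le x hx j, ha_le y hy j]
  · exact Or.inr (by simpa [a, hi] using hlt x hx i)

/-- A form of the **Knaster–Kuratowski–Mazurkiewicz theorem**. -/
theorem exists_mem_closure_or_eq_zero {A : I → Set (I → ℝ)} (hA : stdSimplex ℝ I ⊆ ⋃ i, A i) :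
    ∃ x ∈ stdSimplex ℝ I, ∀ i, x ∈ closure (A i) ∨ x i = 0 := by
  choose x hx hxA using fun n : ℕ ↦
    exists_dist_lt_or_lt hA (Nat.one_div_pos_of_nat (n := n) (α := ℝ))
  obtain ⟨z, hz, φ, hφ, hlim⟩ := (isCompact_stdSimplex ℝ I).tendsto_subseq hx
  have hε : Tendsto (fun n ↦ 1 / ((φ n : ℝ) + 1)) atTop (𝓝 0) :=
    tendsto_one_div_add_atTop_nhds_zero_nat.comp hφ.tendsto_atTop
  refine ⟨z, hz, fun i ↦ or_iff_not_imp_right.2 fun hzi ↦ Metric.mem_closure_iff.2 fun η hη ↦ ?_⟩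
  have hpos : 0 < z i := (hz.1 i).lt_of_ne' hzi
  have hlt := hε.eventually_lt (tendsto_pi_nhds.1 hlim i) hpos
  have hnear : Tendsto (fun n ↦ dist z (x (φ n)) + 1 / ((φ n : ℝ) + 1)) atTop (𝓝 0) := by
    simpa using (tendsto_const_nhds (x := z).dist hlim).add hε
  obtain ⟨n, hn, hnη⟩ := (hlt.and (hnear.eventually_lt_const hη)).exists
  obtain ⟨y, hy, hxy⟩ := (hxA (φ n) i).resolve_right hn.le.not_gt
  exact ⟨y, hy, ((dist_triangle _ _ _).trans_lt (by gcongr)).trans hnη⟩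

/-- **Brouwer's fixed point theorem** on the standard simplex. -/
theorem exists_isFixedPt_of_mapsTo_stdSimplex {f : (I → ℝ) → I → ℝ}
    (hf : ContinuousOn f (stdSimplex ℝ I))
    (hmaps : Set.MapsTo f (stdSimplex ℝ I) (stdSimplex ℝ I)) :
    ∃ x ∈ stdSimplex ℝ I, Function.IsFixedPt f x := by
  let A (i : I) : Set (I → ℝ) := {x ∈ stdSimplex ℝ I | x i ≤ f x i}
  have hclosed : ∀ i, IsClosed (A i) := fun i ↦ (isClosed_stdSimplex ℝ I).isClosed_le
    (continuous_apply i).continuousOn ((continuous_apply i).comp_continuousOn hf)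
  have hA : stdSimplex ℝ I ⊆ ⋃ i, A i := fun x hx ↦ by
    obtain ⟨i, -, hi⟩ := exists_le_of_sum_le (univ_nonempty (α := I))
      (hx.2.trans (hmaps hx).2.symm).le
    exact Set.mem_iUnion.2 ⟨i, hx, hi⟩
  obtain ⟨x, hx, hxA⟩ := exists_mem_closure_or_eq_zero hA
  have hle : ∀ i, x i ≤ f x i := fun i ↦ by
    obtain hi | hi := hxA i
    · exact ((hclosed i).closure_eq ▸ hi).2
    · exact hi.trans_le ((hmaps hx).1 i)
  refine ⟨x, hx, funext fun i ↦ ?_⟩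
  exact ((sum_eq_sum_iff_of_le fun i _ ↦ hle i).1 (hx.2.trans (hmaps hx).2.symm) i
    (mem_univ i)).symm

end Simplex

section Schauder

variable {X : Type*} [NormedAddCommGroup X] [NormedSpace ℝ X] {K S : Set X} {f : X → X} {ε : ℝ}

theorem exists_schauder_projection (hS : IsCompact S) (hε : 0 < ε) :
    ∃ (t : Finset X) (φ : t → C(X, ℝ)), ↑t ⊆ S ∧ ∀ y ∈ S, (φ · y) ∈ stdSimplex ℝ t ∧
      dist (∑ p, φ p y • p.1) y < ε := by
  obtain ⟨t, htS, htfin, hcover⟩ := hS.finite_cover_balls hε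
  lift t to Finset X using htfin
  obtain ⟨φ, hφ⟩ := PartitionOfUnity.exists_isSubordinate hS.isClosed
    (fun p : t ↦ Metric.ball p.1 ε) (fun _ ↦ Metric.isOpen_ball)
    (by simpa only [Set.iUnion_subtype, SetLike.mem_coe] using hcover)
  refine ⟨t, φ, htS, fun y hy ↦ ⟨⟨fun p ↦ φ.nonneg p y, ?_⟩, ?_⟩⟩
  · rw [← finsum_eq_sum_of_fintype, φ.sum_eq_one hy]
  · rw [← finsum_eq_sum_of_fintype]
    exact φ.finsum_smul_mem_convex (g := fun p _ ↦ p.1) hy (fun p hp ↦ Metric.mem_ball_comm.1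
      (hφ p (subset_closure hp))) (convex_ball y ε)

theorem exists_dist_map_lt (hK : Convex ℝ K) (hKne : K.Nonempty) (hS : IsCompact S) (hSK : S ⊆ K)
    (hf : ContinuousOn f K) (hmaps : Set.MapsTo f K S) (hε : 0 < ε) :
    ∃ x ∈ K, dist x (f x) < ε := by
  obtain ⟨t, φ, htS, hφ⟩ := exists_schauder_projection hS hε
  let P (w : t → ℝ) : X := ∑ p, w p • p.1
  have hP : Set.MapsTo P (stdSimplex ℝ t) K := fun w hw ↦
    hK.sum_mem (fun p _ ↦ hw.1 p) hw.2 fun p _ ↦ hSK (htS p.2)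
  have hfP : ContinuousOn (f ∘ P) (stdSimplex ℝ t) := hf.comp (by fun_prop) hP
  have : Nonempty t := by
    obtain ⟨x, hx⟩ := hKne
    obtain ⟨p, -, -⟩ := exists_ne_zero_of_sum_ne_zero ((hφ _ (hmaps hx)).1.2 ▸ one_ne_zero)
    exact ⟨p⟩
  obtain ⟨w, hw, hwfix⟩ := exists_isFixedPt_of_mapsTo_stdSimplex
    (f := fun w p ↦ φ p (f (P w)))
    (continuousOn_pi.2 fun p ↦ (φ p).continuous.comp_continuousOn hfP)
    fun w hw ↦ (hφ _ (hmaps (hP hw))).1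
  refine ⟨P w, hP hw, ?_⟩
  have hPw : P (fun p ↦ φ p (f (P w))) = P w := congrArg P hwfix
  calc
    dist (P w) (f (P w)) = dist (P fun p ↦ φ p (f (P w))) (f (P w)) := by rw [hPw]
    _ < ε := (hφ _ (hmaps (hP hw))).2

/-- **Schauder's fixed point theorem**. -/
theorem exists_isFixedPt_of_mapsTo_isCompact (hK : Convex ℝ K) (hKne : K.Nonempty)
    (hS : IsCompact S) (hSK : S ⊆ K) (hf : ContinuousOn f K) (hmaps : Set.MapsTo f K S) :
    ∃ x ∈ K, Function.IsFixedPt f x := by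
  choose x hx hdist using fun n : ℕ ↦
    exists_dist_map_lt hK hKne hS hSK hf hmaps (Nat.one_div_pos_of_nat (n := n) (α := ℝ))
  obtain ⟨y, hy, φ, hφ, hlim⟩ := hS.tendsto_subseq fun n ↦ hmaps (hx n)
  have hdist_lim : Tendsto (fun n ↦ dist (f (x (φ n))) (x (φ n))) atTop (𝓝 0) :=
    (squeeze_zero (fun _ ↦ dist_nonneg) (fun n ↦ (dist_comm _ _).trans_le (hdist n).le)
      tendsto_one_div_add_atTop_nhds_zero_nat).comp hφ.tendsto_atTop
  have hxlim : Tendsto (x ∘ φ) atTop (𝓝[K] y) :=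
    tendsto_nhdsWithin_iff.2 ⟨hlim.congr_dist hdist_lim, .of_forall fun n ↦ hx _⟩
  exact ⟨y, hSK hy, tendsto_nhds_unique ((hf y (hSK hy)).tendsto.comp hxlim) hlim⟩

end Schauder

theorem continuousOn_of_isClosed_graph {X Y : Type*} [TopologicalSpace X] [TopologicalSpace Y]
    {A : Set X} {B : Set Y} {G : Set (X × Y)} {f : X → Y} (hB : IsCompact B)
    (hf : Set.MapsTo f A B) (hG : IsClosed G) (hfG : ∀ x ∈ A, ∀ y ∈ B, (x, y) ∈ G ↔ y = f x) :
    ContinuousOn f A := by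
  refine fun x hx ↦ hB.tendsto_nhds_of_unique_mapClusterPt
    (eventually_mem_nhdsWithin.mono fun z hz ↦ hf hz) fun y hy hcluster ↦ (hfG x hx y hy).1 ?_
  obtain ⟨U, hU, hfU⟩ := mapClusterPt_iff_ultrafilter.1 hcluster
  have hid : Tendsto id (U : Filter X) (𝓝 x) := hU.trans nhdsWithin_le_nhds
  refine hG.mem_of_tendsto (hid.prodMk_nhds hfU) ?_
  exact (eventually_mem_nhdsWithin.filter_mono hU).mono fun z hz ↦ (hfG z hz _ (hf hz)).2 rfl

/-- Every ray through a non-zero point `u` of `K` meets `N` in the single point `s u • u`. For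
`N = {u | 𝓕(T(u), u) = 0}` this is condition (c1). -/
structure IsRadialScaling {X : Type*} [AddCommGroup X] [Module ℝ X] (K N : Set X) (s : X → ℝ) :
    Prop where
  pos : ∀ {u}, u ∈ K → u ≠ 0 → 0 < s u
  smul_mem_iff : ∀ {u}, u ∈ K → u ≠ 0 → ∀ {t : ℝ}, 0 < t → (t • u ∈ N ↔ t = s u)

/-- The map that moves the points of `K` lying beyond `N` back to `N` along their rays. -/
noncomputable def radialTruncation {X : Type*} [AddCommGroup X] [Module ℝ X] (s : X → ℝ)
    (u : X) : X :=
  min 1 (s u) • u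

namespace IsRadialScaling

section Module

variable {X : Type*} [AddCommGroup X] [Module ℝ X] {K N : Set X} {s : X → ℝ} {T : X → X} {u v : X}

theorem apply_smul (hs : IsRadialScaling K N s) {c : ℝ} (hc : 0 < c) (hu : u ∈ K)
    (hcu : c • u ∈ K) (hu0 : u ≠ 0) : s (c • u) = c⁻¹ * s u := by
  have hpos := hs.pos hu hu0
  refine ((hs.smul_mem_iff hcu (smul_ne_zero hc.ne' hu0) (by positivity)).1 ?_).symm
  rw [smul_smul, mul_right_comm, inv_mul_cancel₀ hc.ne', one_mul]
  exact (hs.smul_mem_iff hu hu0 hpos).2 rfl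

theorem isFixedPt_of_comp_radialTruncation (hs : IsRadialScaling K N s)
    (hNT : ∀ u ∈ N, u ≠ 0 → ∀ c : ℝ, 1 ≤ c → T u = c • u → c = 1) (hv : v ∈ K)
    (hfix : Function.IsFixedPt (T ∘ radialTruncation s) v) : Function.IsFixedPt T v := by
  obtain rfl | hv0 := eq_or_ne v 0
  · simpa [Function.IsFixedPt, radialTruncation] using hfix
  have hpos := hs.pos hv hv0
  obtain hle | hlt := le_or_gt 1 (s v)
  · simpa [Function.IsFixedPt, radialTruncation, hle] using hfix
  have hT : T (s v • v) = (s v)⁻¹ • s v • v := by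
    simpa [Function.IsFixedPt, radialTruncation, hlt.le, inv_smul_smul₀ hpos.ne'] using hfix
  have hsv : (s v)⁻¹ = 1 := hNT _ ((hs.smul_mem_iff hv hv0 hpos).2 rfl)
    (smul_ne_zero hpos.ne' hv0) _ ((one_le_inv₀ hpos).2 hlt.le) hT
  exact absurd (inv_eq_one.1 hsv) hlt.ne

theorem mapsTo_radialTruncation (hs : IsRadialScaling K N s)
    (hK : ∀ c : ℝ, 0 ≤ c → ∀ u ∈ K, c • u ∈ K) : Set.MapsTo (radialTruncation s) K K := by
  intro u hu
  obtain rfl | hu0 := eq_or_ne u 0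
  · simpa [radialTruncation] using hu
  · exact hK _ (le_min zero_le_one (hs.pos hu hu0).le) u hu

end Module

variable {X : Type*} [NormedAddCommGroup X] [NormedSpace ℝ X] {K N : Set X} {s : X → ℝ}
  {T : X → X} {m M : ℝ} {u : X}

theorem apply_eq (hs : IsRadialScaling K N s) (hK : ∀ c : ℝ, 0 ≤ c → ∀ u ∈ K, c • u ∈ K)
    (hu : u ∈ K) (hu0 : u ≠ 0) : s u = ‖u‖⁻¹ * s (‖u‖⁻¹ • u) := by
  have hpos : 0 < ‖u‖ := norm_pos_iff.2 hu0
  rw [hs.apply_smul (inv_pos.2 hpos) hu (hK _ (inv_pos.2 hpos).le u hu) hu0, inv_inv,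
    inv_mul_cancel_left₀ hpos.ne']

theorem norm_radialTruncation_le_norm (hs : IsRadialScaling K N s) (hu : u ∈ K) :
    ‖radialTruncation s u‖ ≤ ‖u‖ := by
  obtain rfl | hu0 := eq_or_ne u 0
  · simp [radialTruncation]
  · rw [radialTruncation, norm_smul,
      Real.norm_of_nonneg (le_min zero_le_one (hs.pos hu hu0).le)]
    exact mul_le_of_le_one_left (norm_nonneg u) (min_le_left _ _)

theorem norm_radialTruncation_le (hs : IsRadialScaling K N s)
    (hK : ∀ c : ℝ, 0 ≤ c → ∀ u ∈ K, c • u ∈ K) (hsM : ∀ u ∈ K, ‖u‖ = 1 → s u ≤ M) (hu : u ∈ K)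
    (hu0 : u ≠ 0) : ‖radialTruncation s u‖ ≤ M := by
  have hpos : 0 < ‖u‖ := norm_pos_iff.2 hu0
  calc
    ‖radialTruncation s u‖ = min 1 (s u) * ‖u‖ := by
      rw [radialTruncation, norm_smul,
        Real.norm_of_nonneg (le_min zero_le_one (hs.pos hu hu0).le)]
    _ ≤ s u * ‖u‖ := by gcongr; exact min_le_right _ _
    _ = s (‖u‖⁻¹ • u) := by
      rw [hs.apply_eq hK hu hu0, mul_comm, mul_inv_cancel_left₀ hpos.ne']
    _ ≤ M := hsM _ (hK _ (inv_pos.2 hpos).le u hu) (norm_smul_inv_norm (𝕜 := ℝ) hu0)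

theorem continuousOn_sphere (hs : IsRadialScaling K N s) (hN : IsClosed N) (hm : 0 < m)
    (hsmM : ∀ u ∈ K, ‖u‖ = 1 → s u ∈ Set.Icc m M) : ContinuousOn s {u ∈ K | ‖u‖ = 1} := by
  have hgraph : IsClosed {p : X × ℝ | p.2 • p.1 ∈ N} := hN.preimage (by fun_prop)
  refine continuousOn_of_isClosed_graph isCompact_Icc (fun u hu ↦ hsmM u hu.1 hu.2) hgraph
    fun u hu t ht ↦ ?_
  exact hs.smul_mem_iff hu.1 (norm_ne_zero_iff.1 (hu.2 ▸ one_ne_zero)) (hm.trans_le ht.1)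

theorem continuousOn_sdiff_zero (hs : IsRadialScaling K N s)
    (hK : ∀ c : ℝ, 0 ≤ c → ∀ u ∈ K, c • u ∈ K) (hsphere : ContinuousOn s {u ∈ K | ‖u‖ = 1}) :
    ContinuousOn s (K \ {0}) := by
  have hnorm : ContinuousOn (fun u : X ↦ ‖u‖⁻¹) (K \ {0}) :=
    continuous_norm.continuousOn.inv₀ fun u hu ↦ norm_ne_zero_iff.2 hu.2
  refine (hnorm.mul (hsphere.comp (hnorm.smul continuousOn_id) fun u hu ↦ ?_)).congr
    fun u hu ↦ hs.apply_eq hK hu.1 hu.2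
  exact ⟨hK _ (inv_nonneg.2 (norm_nonneg u)) u hu.1, norm_smul_inv_norm (𝕜 := ℝ) hu.2⟩

theorem continuousOn_radialTruncation (hs : IsRadialScaling K N s)
    (hcont : ContinuousOn s (K \ {0})) : ContinuousOn (radialTruncation s) K := by
  intro u hu
  obtain rfl | hu0 := eq_or_ne u 0
  · have hzero : Tendsto norm (𝓝[K] (0 : X)) (𝓝 0) :=
      tendsto_norm_zero.mono_left nhdsWithin_le_nhds
    rw [ContinuousWithinAt, radialTruncation, smul_zero]
    exact squeeze_zero_norm' (eventually_mem_nhdsWithin.mono fun v hv ↦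
      hs.norm_radialTruncation_le_norm hv) hzero
  · have hsu : ContinuousWithinAt s K u :=
      (hcont u ⟨hu, hu0⟩).mono_of_mem_nhdsWithin
        (inter_mem self_mem_nhdsWithin (mem_nhdsWithin_of_mem_nhds (compl_singleton_mem_nhds hu0)))
    exact (continuousWithinAt_const.min hsu).smul continuousWithinAt_id

theorem exists_isFixedPt (hs : IsRadialScaling K N s) (hKclosed : IsClosed K)
    (hKconv : Convex ℝ K) (hKne : K.Nonempty) (hK : ∀ c : ℝ, 0 ≤ c → ∀ u ∈ K, c • u ∈ K)
    (hTmaps : Set.MapsTo T K K) (hTcont : ContinuousOn T K)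
    (hTcompact : ∀ A ⊆ K, Bornology.IsBounded A → IsCompact (closure (T '' A)))
    (hN : IsClosed N) (hm : 0 < m) (hsmM : ∀ u ∈ K, ‖u‖ = 1 → s u ∈ Set.Icc m M)
    (hNT : ∀ u ∈ N, u ≠ 0 → ∀ c : ℝ, 1 ≤ c → T u = c • u → c = 1) :
    ∃ v ∈ K, Function.IsFixedPt T v := by
  have hmaps : Set.MapsTo (radialTruncation s) K K := hs.mapsTo_radialTruncation hK
  have hcont : ContinuousOn (radialTruncation s) K := hs.continuousOn_radialTruncation
    (hs.continuousOn_sdiff_zero hK (hs.continuousOn_sphere hN hm hsmM))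
  have hbdd : Bornology.IsBounded (radialTruncation s '' K) := by
    refine isBounded_iff_forall_norm_le.2 ⟨|M|, Set.forall_mem_image.2 fun u hu ↦ ?_⟩
    obtain rfl | hu0 := eq_or_ne u 0
    · simp [radialTruncation]
    · exact (hs.norm_radialTruncation_le hK (fun u hu hu1 ↦ (hsmM u hu hu1).2) hu hu0).trans
        (le_abs_self M)
  obtain ⟨v, hv, hfix⟩ := exists_isFixedPt_of_mapsTo_isCompact hKconv hKne
    (hTcompact _ hmaps.image_subset hbdd)
    (closure_minimal (hTmaps.mono_left hmaps.image_subset).image_subset hKclosed)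
    (hTcont.comp hcont hmaps)
    fun u hu ↦ subset_closure (Set.mem_image_of_mem T (Set.mem_image_of_mem _ hu))
  exact ⟨v, hv, hs.isFixedPt_of_comp_radialTruncation hNT hv hfix⟩

end IsRadialScaling

theorem nehari_fixed_point_single_equation_general {X Y : Type*} [NormedAddCommGroup X]
    [NormedSpace ℝ X] [TopologicalSpace Y] [T1Space Y] [Zero Y] {K : Set X}
    (hKclosed : IsClosed K) (hKconv : Convex ℝ K)
    (hKcone : ∀ c : ℝ, 0 ≤ c → ∀ u ∈ K, c • u ∈ K) (hKne : K.Nonempty) {T : X → X}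
    (hTmaps : Set.MapsTo T K K) (hTcont : ContinuousOn T K)
    (hTcompact : ∀ A ⊆ K, Bornology.IsBounded A → IsCompact (closure (T '' A)))
    {F : X → X → Y} (hFcont : ContinuousOn (fun p : X × X ↦ F p.1 p.2) (K ×ˢ K))
    (hF : ∀ u ∈ K, u ≠ 0 → ∀ c : ℝ, 1 ≤ c → (F (c • u) u = 0 ↔ c = 1)) {s : X → ℝ}
    (c1 : ∀ u ∈ K, u ≠ 0 → 0 < s u ∧ F (T (s u • u)) (s u • u) = 0 ∧
      ∀ σ : ℝ, 0 < σ → F (T (σ • u)) (σ • u) = 0 → σ = s u)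
    {m M : ℝ} (hm : 0 < m) (c2 : ∀ u ∈ K, ‖u‖ = 1 → s u ∈ Set.Icc m M) :
    ∃ u ∈ K, T u = u ∧ (T 0 ≠ 0 → u ≠ 0 ∧ s u = 1 ∧ F (T u) u = 0) := by
  let N : Set X := {u ∈ K | F (T u) u = 0}
  have hFT : ContinuousOn (fun u ↦ F (T u) u) K :=
    hFcont.comp (hTcont.prodMk continuousOn_id) fun u hu ↦ ⟨hTmaps hu, hu⟩
  have hN : IsClosed N := hFT.preimage_isClosed_of_isClosed hKclosed isClosed_singleton
  have hs : IsRadialScaling K N s := by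
    refine ⟨fun hu hu0 ↦ (c1 _ hu hu0).1, fun {u} hu hu0 t ht ↦ ⟨fun h ↦ ?_, ?_⟩⟩
    · exact (c1 u hu hu0).2.2 t ht h.2
    · rintro rfl
      exact ⟨hKcone _ ht.le u hu, (c1 u hu hu0).2.1⟩
  have hNT : ∀ u ∈ N, u ≠ 0 → ∀ c : ℝ, 1 ≤ c → T u = c • u → c = 1 := fun u hu hu0 c hc hTu ↦
    (hF u hu.1 hu0 c hc).1 (hTu ▸ hu.2)
  obtain ⟨v, hv, hfix⟩ := hs.exists_isFixedPt hKclosed hKconv hKne hKcone hTmaps hTcont hTcompact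
    hN hm c2 hNT
  refine ⟨v, hv, hfix, fun hT0 ↦ ?_⟩
  have hv0 : v ≠ 0 := fun h ↦ hT0 (h ▸ hfix)
  have hFv : F (T v) v = 0 := by
    simpa only [hfix.eq, one_smul] using (hF v hv hv0 1 le_rfl).2 rfl
  exact ⟨hv0, ((hs.smul_mem_iff hv hv0 one_pos).1 (by rw [one_smul]; exact ⟨hv, hFv⟩)).symm, hFv⟩

theorem nehari_fixed_point_single_equation
    {X : Type*}
    [NormedAddCommGroup X] [NormedSpace ℝ X] [CompleteSpace X]
    -- K is a non-degenerate cone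
    (K : Set X) (hKclosed : IsClosed K) (hKconv : Convex ℝ K)
    (hKcone : ∀ lam : ℝ, 0 ≤ lam → ∀ u ∈ K, lam • u ∈ K)
    (hKnondeg : ∃ u ∈ K, u ≠ 0)
    -- T : K → K is completely continuous
    (T : X → X) (hTmaps : ∀ u ∈ K, T u ∈ K)
    (hTcont : ContinuousOn T K)
    (hTcompact : ∀ A ⊆ K, Bornology.IsBounded A → IsCompact (closure (T '' A)))
    -- the functional 𝓕 : K × K → ℝ, continuous, with 𝓕(λu,u)=0 ↔ λ=1
    (F : X → X → ℝ)
    (hFcont : ContinuousOn (fun p : X × X => F p.1 p.2) (K ×ˢ K))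
    (hF : ∀ u ∈ K, u ≠ 0 → ∀ lam : ℝ, 0 < lam → (F (lam • u) u = 0 ↔ lam = 1))
    -- condition (c1): s(u) is the unique positive zero
    (s : X → ℝ)
    (c1 : ∀ u ∈ K, u ≠ 0 →
      0 < s u ∧ F (T (s u • u)) (s u • u) = 0 ∧
      ∀ σ : ℝ, 0 < σ → F (T (σ • u)) (σ • u) = 0 → σ = s u)
    -- condition (c2): m < s < M on the unit sphere of the cone
    (m M : ℝ) (hm : 0 < m) (hmM : m < M)
    (c2 : ∀ u ∈ K, ‖u‖ = 1 → m < s u ∧ s u < M) :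
    ∃ u ∈ K, T u = u ∧
      (T 0 ≠ 0 → u ≠ 0 ∧ s u = 1 ∧ F (T u) u = 0) :=
  nehari_fixed_point_single_equation_general hKclosed hKconv hKcone (hKnondeg.imp fun _ h ↦ h.1)
    hTmaps hTcont hTcompact hFcont (fun u hu hu0 c hc ↦ hF u hu hu0 c (one_pos.trans_le hc)) c1 hm
    fun u hu hu1 ↦ Set.Ioo_subset_Icc_self (c2 u hu hu1)
end
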